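/- Entropy dissipation: let n be a nonnegative bounded solution of the Kompaneets equation with initial data n₀, not identically 0, satisfying n₀(x) ≤ C₀(1 + x²)e^{−x} for all x > 0 and some constant C₀ > 0. Then for every t > 0, (d/dt) H(n(·,t)) + ∫₀^∞ J(x, n(·,t))² / ( n(x,t)(n(x,t) + x²) ) dx = 0, where H is the quantum entropy functional. -/

import Mathlib

/-!
Let `h (x, u)` be the entropy density and `q = ∂_u h = x + log (n / (n + x²))`.  Algebra gives
`∂ₓ q = J / (n (n + x²))`, so formally
`d/dt H = ∫ q ∂ₓJ dx = -∫ J ∂ₓq dx = -∫ J² / (n (n + x²)) dx`.  What has to be justified is the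
differentiation under the integral, the integrability of `h` and of the dissipation, and the
vanishing of the boundary terms `q J` at `0` and `∞`, although nothing is prescribed at `x = 0` and
the equation holds only pointwise, without continuity of the derivatives.

In the variable `y = log x` the function `g (y, t) = n (exp y, t)` solves
`g_t = g_yy + (e^y - 1 + 2 e^{-y} g) g_y + (2 e^y - 2) g`, a uniformly parabolic equation with lower
order coefficients of size `e^{|y|}`.  Everything rests on a maximum principle needing pointwise
derivatives only:

* comparison with explicit barriers shows that `n` either vanishes for all `t > 0` or is positive,
  decays like a power of `1 / x` at infinity, and is at least `ε exp (-κ (1 - log x)²)` near zero,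
  all locally uniformly in `t > 0`;
* doubling of variables gives a logarithmic gradient estimate for positive solutions, which at the
  scale `e^{-|y|}` reads `|g_y| ≤ C e^{|y|} g (2 + log (m / g))²` for a majorant `m` of `g`.

Together these bound `h`, `J² / (n (n + x²))` and `q J / x` by a multiple of the integrable weight
`x ^ (-1/2)` on `(0, 1]`, `x ^ (-2)` on `(1, ∞)`, locally uniformly in time.  The same gradient
estimate for difference quotients in `y` bounds `g_yy`, hence `g_t`, locally, so the entropy over a
compact interval `[a, b]` of `(0, ∞)` can be differentiated under the integral and integrated by
parts.  As `[a, b]` exhausts `(0, ∞)` the derivatives converge locally uniformly in time.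
-/

open MeasureTheory Filter Set Real Topology

/-- The Kompaneets photon flux `J(x,u) = x² u'(x) + (x² - 2x) u(x) + u(x)²`. -/
noncomputable def kompFlux (u : ℝ → ℝ) (x : ℝ) : ℝ :=
  x ^ 2 * deriv u x + (x ^ 2 - 2 * x) * u x + u x ^ 2

/-- The quantum entropy functional
`H(u) = ∫₀^∞ ( x u + u ln u - (u + x²) ln(u + x²) + x² ln(x²) ) dx`. -/
noncomputable def Hent (u : ℝ → ℝ) : ℝ :=
  ∫ x in Set.Ioi (0:ℝ),
    (x * u x + u x * Real.log (u x) - (u x + x ^ 2) * Real.log (u x + x ^ 2)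
      + x ^ 2 * Real.log (x ^ 2))

/-- A (global-in-time) nonnegative solution of the Kompaneets equation
`∂ₜ n = ∂ₓ J(x, n(·,t))` on `(0,∞) × (0,∞)` with initial data `n₀`:
nonnegative, bounded, `C^{2,1}` in the interior, attaining the initial data,
continuous into `L¹`, and with `x² n → 0` and `x² ∂ₓ n → 0` as `x → ∞`,
uniformly on the indicated time sets.  No boundary condition at `x = 0`. -/
structure IsKompSol (n : ℝ → ℝ → ℝ) (n₀ : ℝ → ℝ) : Prop where
  nonneg : ∀ x t : ℝ, 0 < x → 0 < t → 0 ≤ n x t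
  bounded : ∃ M : ℝ, ∀ x t : ℝ, 0 < x → 0 < t → n x t ≤ M
  init : ∀ x : ℝ, 0 < x → n x 0 = n₀ x
  contOn : ContinuousOn (fun p : ℝ × ℝ => n p.1 p.2)
    ((Set.Ioi (0:ℝ)) ×ˢ (Set.Ioi (0:ℝ)))
  diff_x : ∀ t : ℝ, 0 < t → ∀ x : ℝ, 0 < x → DifferentiableAt ℝ (fun y => n y t) x
  diff_xx : ∀ t : ℝ, 0 < t → ∀ x : ℝ, 0 < x →
    DifferentiableAt ℝ (deriv (fun y => n y t)) x
  diff_t : ∀ x : ℝ, 0 < x → ∀ t : ℝ, 0 < t → DifferentiableAt ℝ (fun τ => n x τ) t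
  pde : ∀ x : ℝ, 0 < x → ∀ t : ℝ, 0 < t →
    deriv (fun τ => n x τ) t = deriv (fun y => kompFlux (fun z => n z t) y) x
  l1init : Filter.Tendsto (fun t => ∫ x in Set.Ioi (0:ℝ), |n x t - n₀ x|)
    (𝓝[>] (0:ℝ)) (nhds 0)
  decay : ∀ T : ℝ, 0 < T → ∀ ε : ℝ, 0 < ε → ∃ R : ℝ, 0 < R ∧
    ∀ x : ℝ, R ≤ x → ∀ t : ℝ, 0 ≤ t → t < T → x ^ 2 * n x t < ε
  decay' : ∀ T : ℝ, 0 < T → ∀ ε : ℝ, 0 < ε → ∃ R : ℝ, 0 < R ∧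
    ∀ x : ℝ, R ≤ x → ∀ t : ℝ, 1 / x ^ 2 ≤ t → t < T →
      |x ^ 2 * deriv (fun y => n y t) x| < ε

/-! ### The parabolic maximum principle -/

/-- `w` has pointwise parabolic derivatives on the space-time set `Ω`: it is continuous on `Ω`, and
at each `(y, t) ∈ Ω` its derivatives `∂_y w`, `∂_y² w`, `∂_t w` exist and are `wy`, `wyy`, `wt`.
They are two-sided and need not be continuous. -/
structure HasParabolicDerivOn (w wy wyy wt : ℝ → ℝ → ℝ) (Ω : Set (ℝ × ℝ)) : Prop where
  continuousOn : ContinuousOn (fun p : ℝ × ℝ => w p.1 p.2) Ω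
  hasDerivAt_y : ∀ ⦃y t⦄, (y, t) ∈ Ω → HasDerivAt (fun z => w z t) (wy y t) y
  hasDerivAt_yy : ∀ ⦃y t⦄, (y, t) ∈ Ω → HasDerivAt (fun z => wy z t) (wyy y t) y
  hasDerivAt_t : ∀ ⦃y t⦄, (y, t) ∈ Ω → HasDerivAt (fun s => w y s) (wt y t) t

namespace HasParabolicDerivOn

variable {v vy vyy vt w wy wyy wt : ℝ → ℝ → ℝ} {Ω Ω' : Set (ℝ × ℝ)}

lemma mono (hw : HasParabolicDerivOn w wy wyy wt Ω) (h : Ω' ⊆ Ω) :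
    HasParabolicDerivOn w wy wyy wt Ω' where
  continuousOn := hw.continuousOn.mono h
  hasDerivAt_y _ _ hp := hw.hasDerivAt_y (h hp)
  hasDerivAt_yy _ _ hp := hw.hasDerivAt_yy (h hp)
  hasDerivAt_t _ _ hp := hw.hasDerivAt_t (h hp)

lemma add (hv : HasParabolicDerivOn v vy vyy vt Ω) (hw : HasParabolicDerivOn w wy wyy wt Ω) :
    HasParabolicDerivOn (fun y t => v y t + w y t) (fun y t => vy y t + wy y t)
      (fun y t => vyy y t + wyy y t) (fun y t => vt y t + wt y t) Ω where
  continuousOn := hv.continuousOn.add hw.continuousOn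
  hasDerivAt_y _ _ hp := (hv.hasDerivAt_y hp).add (hw.hasDerivAt_y hp)
  hasDerivAt_yy _ _ hp := (hv.hasDerivAt_yy hp).add (hw.hasDerivAt_yy hp)
  hasDerivAt_t _ _ hp := (hv.hasDerivAt_t hp).add (hw.hasDerivAt_t hp)

lemma sub (hv : HasParabolicDerivOn v vy vyy vt Ω) (hw : HasParabolicDerivOn w wy wyy wt Ω) :
    HasParabolicDerivOn (fun y t => v y t - w y t) (fun y t => vy y t - wy y t)
      (fun y t => vyy y t - wyy y t) (fun y t => vt y t - wt y t) Ω where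
  continuousOn := hv.continuousOn.sub hw.continuousOn
  hasDerivAt_y _ _ hp := (hv.hasDerivAt_y hp).sub (hw.hasDerivAt_y hp)
  hasDerivAt_yy _ _ hp := (hv.hasDerivAt_yy hp).sub (hw.hasDerivAt_yy hp)
  hasDerivAt_t _ _ hp := (hv.hasDerivAt_t hp).sub (hw.hasDerivAt_t hp)

lemma const_mul (c : ℝ) (hw : HasParabolicDerivOn w wy wyy wt Ω) :
    HasParabolicDerivOn (fun y t => c * w y t) (fun y t => c * wy y t)
      (fun y t => c * wyy y t) (fun y t => c * wt y t) Ω where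
  continuousOn := continuousOn_const.mul hw.continuousOn
  hasDerivAt_y _ _ hp := (hw.hasDerivAt_y hp).const_mul c
  hasDerivAt_yy _ _ hp := (hw.hasDerivAt_yy hp).const_mul c
  hasDerivAt_t _ _ hp := (hw.hasDerivAt_t hp).const_mul c

lemma time_mul {f f' : ℝ → ℝ} (hw : HasParabolicDerivOn w wy wyy wt Ω)
    (hf : ∀ ⦃y t⦄, (y, t) ∈ Ω → HasDerivAt f (f' t) t) :
    HasParabolicDerivOn (fun y t => f t * w y t) (fun y t => f t * wy y t)
      (fun y t => f t * wyy y t) (fun y t => f' t * w y t + f t * wt y t) Ω where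
  continuousOn := by
    have hf_cont : ContinuousOn (fun p : ℝ × ℝ => f p.2) Ω := fun p hp =>
      ((hf hp).continuousAt.comp continuous_snd.continuousAt).continuousWithinAt
    exact hf_cont.mul hw.continuousOn
  hasDerivAt_y _ t hp := (hw.hasDerivAt_y hp).const_mul (f t)
  hasDerivAt_yy _ t hp := (hw.hasDerivAt_yy hp).const_mul (f t)
  hasDerivAt_t _ _ hp := (hf hp).mul (hw.hasDerivAt_t hp)

lemma comp_affine (hw : HasParabolicDerivOn w wy wyy wt Ω) (y₀ a t₀ c : ℝ)
    (h : MapsTo (fun p : ℝ × ℝ => (y₀ + a * p.1, t₀ + c * p.2)) Ω' Ω) :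
    HasParabolicDerivOn (fun z τ => w (y₀ + a * z) (t₀ + c * τ))
      (fun z τ => a * wy (y₀ + a * z) (t₀ + c * τ))
      (fun z τ => a ^ 2 * wyy (y₀ + a * z) (t₀ + c * τ))
      (fun z τ => c * wt (y₀ + a * z) (t₀ + c * τ)) Ω' := by
  have affine (b m x : ℝ) : HasDerivAt (fun x => b + m * x) m x := by
    simpa using ((hasDerivAt_id x).const_mul m).const_add b
  refine ⟨hw.continuousOn.comp (by fun_prop) h, fun z τ hp => ?_, fun z τ hp => ?_,
    fun z τ hp => ?_⟩
  · exact ((hw.hasDerivAt_y (h hp)).comp z (affine y₀ a z)).congr_deriv (mul_comm _ _)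
  · have := ((hw.hasDerivAt_yy (h hp)).comp z (affine y₀ a z)).const_mul a
    exact this.congr_deriv (by ring)
  · exact ((hw.hasDerivAt_t (h hp)).comp τ (affine t₀ c τ)).congr_deriv (mul_comm _ _)

end HasParabolicDerivOn

lemma hasParabolicDerivOn_of_space {f f' f'' : ℝ → ℝ} {Ω : Set (ℝ × ℝ)}
    (h₁ : ∀ y, HasDerivAt f (f' y) y) (h₂ : ∀ y, HasDerivAt f' (f'' y) y) :
    HasParabolicDerivOn (fun y _ => f y) (fun y _ => f' y) (fun y _ => f'' y) (fun _ _ => 0) Ω where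
  continuousOn := by
    have hf : Continuous f := continuous_iff_continuousAt.2 fun y => (h₁ y).continuousAt
    exact (hf.comp continuous_fst).continuousOn
  hasDerivAt_y y _ _ := h₁ y
  hasDerivAt_yy y _ _ := h₂ y
  hasDerivAt_t _ t _ := hasDerivAt_const t _

lemma hasParabolicDerivOn_exp (a b : ℝ) (Ω : Set (ℝ × ℝ)) :
    HasParabolicDerivOn (fun y t => exp (a * y + b * t)) (fun y t => a * exp (a * y + b * t))
      (fun y t => a ^ 2 * exp (a * y + b * t)) (fun y t => b * exp (a * y + b * t)) Ω := by
  have hexp_y (y t : ℝ) :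
      HasDerivAt (fun z => exp (a * z + b * t)) (a * exp (a * y + b * t)) y :=
    (((hasDerivAt_id y).const_mul a).add_const (b * t)).exp.congr_deriv (by simp [mul_comm])
  have hexp_t (y t : ℝ) :
      HasDerivAt (fun s => exp (a * y + b * s)) (b * exp (a * y + b * t)) t :=
    (((hasDerivAt_id t).const_mul b).const_add (a * y)).exp.congr_deriv (by simp [mul_comm])
  exact ⟨by fun_prop, fun y t _ => hexp_y y t,
    fun y t _ => ((hexp_y y t).const_mul a).congr_deriv (by ring), fun y t _ => hexp_t y t⟩

/-- `(y, t)` is a point of the parabolic interior of `K`: the points of `K` include all spatial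
neighbours of `(y, t)` and its immediate past. Nothing is required of the future. -/
def IsParabolicInterior (K : Set (ℝ × ℝ)) (y t : ℝ) : Prop :=
  (∀ᶠ z in 𝓝 y, (z, t) ∈ K) ∧ ∀ᶠ s in 𝓝[<] t, (y, s) ∈ K

lemma IsParabolicInterior.inter {K L : Set (ℝ × ℝ)} {y t : ℝ} (hK : IsParabolicInterior K y t)
    (hL : IsParabolicInterior L y t) : IsParabolicInterior (K ∩ L) y t :=
  ⟨hK.1.and hL.1, hK.2.and hL.2⟩

lemma isParabolicInterior_Icc_prod_Icc {a b c d y t : ℝ} (hy : y ∈ Ioo a b) (ht : t ∈ Ioc c d) :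
    IsParabolicInterior (Icc a b ×ˢ Icc c d) y t := by
  constructor
  · filter_upwards [Icc_mem_nhds hy.1 hy.2] with z hz using ⟨hz, ht.1.le, ht.2⟩
  · filter_upwards [Ico_mem_nhdsLT ht.1] with s hs
    exact ⟨⟨hy.1.le, hy.2.le⟩, hs.1, hs.2.le.trans ht.2⟩

/-- If `c > 0`, then `a` is a local minimum as well, so `f` is constant near `a` and `c = 0`. -/
lemma second_deriv_nonpos_of_isLocalMax {f f' : ℝ → ℝ} {a c : ℝ} (hmax : IsLocalMax f a)
    (hf : ∀ᶠ y in 𝓝 a, HasDerivAt f (f' y) y) (hf' : HasDerivAt f' c a) : c ≤ 0 := by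
  by_contra! hc
  have hderiv : deriv f =ᶠ[𝓝 a] f' := hf.mono fun y hy => hy.deriv
  have hderiv2 : deriv (deriv f) a = c := by rw [hderiv.deriv_eq, hf'.deriv]
  have hmin : IsLocalMin f a :=
    isLocalMin_of_deriv_deriv_pos (hderiv2 ▸ hc) hmax.deriv_eq_zero hf.self_of_nhds.continuousAt
  have hconst : f =ᶠ[𝓝 a] fun _ => f a := by
    filter_upwards [hmax, hmin] with y h₁ h₂ using le_antisymm h₁ h₂
  have hderiv_zero : deriv f =ᶠ[𝓝 a] fun _ => 0 := by simpa using hconst.deriv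
  exact hc.ne' (by rw [← hderiv2, hderiv_zero.deriv_eq, deriv_const])

lemma deriv_nonneg_of_eventually_le_left {f : ℝ → ℝ} {t c : ℝ} (h : HasDerivAt f c t)
    (hmax : ∀ᶠ s in 𝓝[<] t, f s ≤ f t) : 0 ≤ c := by
  have hslope : Tendsto (slope f t) (𝓝[<] t) (𝓝 c) :=
    h.tendsto_slope.mono_left (nhdsWithin_mono _ fun _ hx => ne_of_lt hx)
  refine ge_of_tendsto hslope ?_
  filter_upwards [hmax, self_mem_nhdsWithin] with s hs hst
  rw [slope_def_field]
  exact div_nonneg_of_nonpos (sub_nonpos.2 hs) (sub_nonpos.2 (le_of_lt hst))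

section Comparison

variable {K : Set (ℝ × ℝ)} {b f g gy gyy gt s sy syy st w wy wyy wt : ℝ → ℝ → ℝ}

lemma HasParabolicDerivOn.derivs_of_isMaxOn (hw : HasParabolicDerivOn w wy wyy wt K) {y t : ℝ}
    (hmax : ∀ p ∈ K, w p.1 p.2 ≤ w y t) (hmem : (y, t) ∈ K) (hint : IsParabolicInterior K y t) :
    wy y t = 0 ∧ wyy y t ≤ 0 ∧ 0 ≤ wt y t := by
  have hloc : IsLocalMax (fun z => w z t) y := hint.1.mono fun z hz => hmax _ hz
  exact ⟨hloc.hasDerivAt_eq_zero (hw.hasDerivAt_y hmem),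
    second_deriv_nonpos_of_isLocalMax hloc (hint.1.mono fun z hz => hw.hasDerivAt_y hz)
      (hw.hasDerivAt_yy hmem),
    deriv_nonneg_of_eventually_le_left (hw.hasDerivAt_t hmem) (hint.2.mono fun s hs => hmax _ hs)⟩

/-- Only the points where the conclusion fails have to be excluded from the parabolic boundary. -/
lemma HasParabolicDerivOn.le_of_strict_subsolution (hg : HasParabolicDerivOn g gy gyy gt K)
    (hs : HasParabolicDerivOn s sy syy st K) (hK : IsCompact K)
    (hg_super : ∀ y t, (y, t) ∈ K → gyy y t + b y t * gy y t + f y t ≤ gt y t)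
    (hs_sub : ∀ y t, (y, t) ∈ K → g y t < s y t →
      IsParabolicInterior K y t ∧ st y t < syy y t + b y t * sy y t + f y t) :
    ∀ y t, (y, t) ∈ K → s y t ≤ g y t := by
  intro y₁ t₁ h₁
  by_contra! hlt
  have hw := hs.sub hg
  obtain ⟨⟨y, t⟩, hmem, hmax⟩ := hK.exists_isMaxOn ⟨_, h₁⟩ hw.continuousOn
  have hpos : g y t < s y t := sub_pos.1 ((sub_pos.2 hlt).trans_le (hmax h₁))
  obtain ⟨hint, hstrict⟩ := hs_sub y t hmem hpos
  obtain ⟨hy, hyy, ht⟩ := hw.derivs_of_isMaxOn (fun _ hp => hmax hp) hmem hint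
  have := hg_super y t hmem
  rw [sub_eq_zero.1 hy] at hstrict
  linarith

/-- As the zero-order coefficient `c` has no sign, the maximum of the ratio `g / s` is used instead
of that of the difference. -/
lemma HasParabolicDerivOn.le_of_strict_supersolution {c : ℝ → ℝ → ℝ}
    (hg : HasParabolicDerivOn g gy gyy gt K)
    (hs : HasParabolicDerivOn s sy syy st K) (hK : IsCompact K) (hs_pos : ∀ p ∈ K, 0 < s p.1 p.2)
    (hg_sub : ∀ y t, (y, t) ∈ K → gt y t ≤ gyy y t + b y t * gy y t + c y t * g y t)
    (hs_super : ∀ y t, (y, t) ∈ K → s y t < g y t →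
      IsParabolicInterior K y t ∧ syy y t + b y t * sy y t + c y t * s y t < st y t) :
    ∀ y t, (y, t) ∈ K → g y t ≤ s y t := by
  intro y₁ t₁ h₁
  by_contra! hlt
  obtain ⟨⟨y, t⟩, hmem, hmax⟩ := hK.exists_isMaxOn ⟨_, h₁⟩
    (hg.continuousOn.div hs.continuousOn fun p hp => (hs_pos p hp).ne')
  set r := g y t / s y t with hr
  have hr_one : 1 < r := ((one_lt_div (hs_pos _ h₁)).2 hlt).trans_le (hmax h₁)
  have hg_eq : g y t = r * s y t := ((div_eq_iff (hs_pos _ hmem).ne').1 hr.symm)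
  have hle : ∀ p ∈ K, g p.1 p.2 - r * s p.1 p.2 ≤ g y t - r * s y t := fun p hp => by
    have : g p.1 p.2 ≤ r * s p.1 p.2 := (div_le_iff₀ (hs_pos p hp)).1 (hmax hp)
    linarith
  have hs_lt : s y t < g y t := hg_eq ▸ lt_mul_of_one_lt_left (hs_pos _ hmem) hr_one
  obtain ⟨hint, hstrict⟩ := hs_super y t hmem hs_lt
  obtain ⟨hy, hyy, ht⟩ := (hg.sub (hs.const_mul r)).derivs_of_isMaxOn hle hmem hint
  have hsub := hg_sub y t hmem
  rw [sub_eq_zero.1 hy, hg_eq] at hsub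
  linarith [mul_lt_mul_of_pos_left hstrict (zero_lt_one.trans hr_one)]

end Comparison

/-! ### The logarithmic gradient estimate -/

/-- `v` solves `v_τ = v_zz + (1 / v² - 2 / v) v_z²` on the cylinder `[-2, 2] × [-1, 0]`, up to lower
order terms controlled by `B`. This is the equation satisfied by `v = 1 / (2 + log (M / u))` when
`u ≤ M` is a positive solution of the heat equation. -/
structure IsLogHeatSol (B : ℝ) (v vz vzz vt : ℝ → ℝ → ℝ) : Prop
    extends HasParabolicDerivOn v vz vzz vt (Icc (-2) 2 ×ˢ Icc (-1) 0) where
  pos : ∀ ⦃z τ⦄, (z, τ) ∈ Icc (-2 : ℝ) 2 ×ˢ Icc (-1 : ℝ) 0 → 0 < v z τ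
  le_half : ∀ ⦃z τ⦄, (z, τ) ∈ Icc (-2 : ℝ) 2 ×ˢ Icc (-1 : ℝ) 0 → v z τ ≤ 1 / 2
  abs_heat_sub_le : ∀ ⦃z τ⦄, (z, τ) ∈ Icc (-2 : ℝ) 2 ×ˢ Icc (-1 : ℝ) 0 →
    |vt z τ - vzz z τ - (1 / v z τ ^ 2 - 2 / v z τ) * vz z τ ^ 2| ≤ B * |vz z τ| + B * v z τ ^ 2

/-- The doubled function in the midpoint `m`, the distance `d` and the time `τ`: a cutoff times the
oscillation of `v`, minus a penalty. For `0 ≤ d ≤ 1 / (4 (B + 1))` the slope of the penalty is at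
least `8 + 4 B`, and at the right end the penalty exceeds the largest oscillation `1 / 2` of `v`. -/
noncomputable def doubled (B : ℝ) (v : ℝ → ℝ → ℝ) (m d τ : ℝ) : ℝ :=
  (1 - m ^ 2) * (1 + τ) * (v (m + d / 2) τ - v (m - d / 2) τ)
    - (16 + 8 * B) * (d - (B + 1) * d ^ 2)

section QuadraticTerms

variable {a b A e W : ℝ}

lemma sq_sub_two_mul_add_bounds (ha : 2 ≤ a) (hb : 2 ≤ b) :
    0 ≤ a ^ 2 - 2 * a + (b ^ 2 - 2 * b) ∧
      a ^ 2 - 2 * a + (b ^ 2 - 2 * b) ≤ a * b * (a + b) / 2 := by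
  constructor
  · nlinarith
  · nlinarith [mul_nonneg (sq_nonneg a) (sub_nonneg.2 hb),
      mul_nonneg (sq_nonneg b) (sub_nonneg.2 ha)]

lemma mul_mul_add_bounds (ha : 2 ≤ a) (hb : 2 ≤ b) :
    16 ≤ a * b * (a + b) ∧ a * b * (a + b) / 2 ≤ a * b * (a + b - 2) := by
  have hab : 4 ≤ a * b := by nlinarith
  constructor <;> nlinarith

/-- With `a = 1 / v x` and `b = 1 / v y` one has `a - b = -(v x - v y) a b`, which turns the
difference of the quadratic gradient terms at the two points into a damping. -/
lemma quadratic_terms_sub_le (ha : 2 ≤ a) (hb : 2 ≤ b) (hW : 0 < W) (hA : 0 < A)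
    (hab : a - b = -(W * (a * b))) (he : 8 * e ≤ W * A) :
    (a ^ 2 - 2 * a) * (A + e) ^ 2 - (b ^ 2 - 2 * b) * (A - e) ^ 2 ≤ -(4 * W * A ^ 2) := by
  obtain ⟨h_sum_nonneg, h_sum_le⟩ := sq_sub_two_mul_add_bounds ha hb
  obtain ⟨h_ge, h_half_le⟩ := mul_mul_add_bounds ha hb
  set P := a * b * (a + b)
  have h_sixteen : 16 * (W * A ^ 2) ≤ P * (W * A ^ 2) :=
    mul_le_mul_of_nonneg_right h_ge (by positivity)
  have h_damping : P / 2 * (W * A ^ 2) ≤ a * b * (a + b - 2) * (W * (A ^ 2 + e ^ 2)) := by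
    refine mul_le_mul h_half_le ?_ (by positivity) (by linarith)
    exact mul_le_mul_of_nonneg_left (le_add_of_nonneg_right (sq_nonneg e)) hW.le
  have h_cross : (a ^ 2 - 2 * a + (b ^ 2 - 2 * b)) * (2 * A * e) ≤ P / 2 * (W * A ^ 2 / 4) :=
    calc (a ^ 2 - 2 * a + (b ^ 2 - 2 * b)) * (2 * A * e)
        ≤ (a ^ 2 - 2 * a + (b ^ 2 - 2 * b)) * (W * A ^ 2 / 4) :=
          mul_le_mul_of_nonneg_left (by nlinarith) h_sum_nonneg
      _ ≤ P / 2 * (W * A ^ 2 / 4) := mul_le_mul_of_nonneg_right h_sum_le (by positivity)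
  have h_expand : (a ^ 2 - 2 * a) * (A + e) ^ 2 - (b ^ 2 - 2 * b) * (A - e) ^ 2
      = -(a * b * (a + b - 2) * (W * (A ^ 2 + e ^ 2)))
        + (a ^ 2 - 2 * a + (b ^ 2 - 2 * b)) * (2 * A * e) := by
    linear_combination (a + b - 2) * (A ^ 2 + e ^ 2) * hab
  have hWA : 0 ≤ W * A ^ 2 := by positivity
  linarith

end QuadraticTerms

section Doubling

variable {B : ℝ} {v vz vzz vt : ℝ → ℝ → ℝ}

/-- The maximum principle at the doubled point, with all relations multiplied by the cutoff `ρ`.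
The space derivatives at the two points are `A ± e`, the second derivatives `X, Y` and the time
derivatives `T, S`. -/
lemma doubling_contradiction {a b A e W X Y T S ρ : ℝ} (hB : 0 ≤ B) (ha : 2 ≤ a) (hb : 2 ≤ b)
    (hW : 0 < W) (hab : a - b = -(W * (a * b))) (hρ : 0 < ρ) (hρ_one : ρ ≤ 1)
    (he : ρ * |e| ≤ W) (hA_ge : 8 + 4 * B ≤ ρ * A) (hA_le : ρ * A ≤ 16 + 8 * B)
    (hXY : ρ * (X - Y) ≤ -(8 * (B + 1) * (16 + 8 * B))) (hTS : -W ≤ ρ * (T - S))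
    (hx : T - X ≤ (a ^ 2 - 2 * a) * (A + e) ^ 2 + B * |A + e| + B / 4)
    (hy : (b ^ 2 - 2 * b) * (A - e) ^ 2 - B * |A - e| - B / 4 ≤ S - Y) : False := by
  have hA : 0 < A := pos_of_mul_pos_right (lt_of_lt_of_le (by positivity) hA_ge) hρ.le
  have hA_ge' : 8 + 4 * B ≤ A := hA_ge.trans (mul_le_of_le_one_left hA.le hρ_one)
  have he_le : 8 * e ≤ W * A := by
    refine le_of_mul_le_mul_left (?_ : ρ * (8 * e) ≤ ρ * (W * A)) hρ
    have := mul_le_mul_of_nonneg_left hA_ge hW.le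
    nlinarith [mul_le_mul_of_nonneg_left (le_abs_self e) hρ.le, mul_nonneg hW.le hB]
  have h_quadratic := quadratic_terms_sub_le ha hb hW hA hab he_le
  have h_abs : |A + e| + |A - e| ≤ 2 * A + 2 * |e| := by
    have h₁ := abs_add_le A e
    have h₂ := abs_sub A e
    rw [abs_of_pos hA] at h₁ h₂
    linarith
  have h_diff : T - S ≤ X - Y - 4 * W * A ^ 2 + B * (2 * A + 2 * |e|) + B / 2 := by
    linarith [mul_le_mul_of_nonneg_left h_abs hB]
  have h_scaled := mul_le_mul_of_nonneg_left h_diff hρ.le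
  have h_damping : W * (1 + 2 * B) ≤ 4 * W * (A * (ρ * A)) := by
    have : (8 + 4 * B) * (8 + 4 * B) ≤ A * (ρ * A) :=
      mul_le_mul hA_ge' hA_ge (by positivity) hA.le
    nlinarith [mul_le_mul_of_nonneg_left this hW.le, mul_nonneg hW.le hB,
      mul_nonneg hW.le (sq_nonneg B)]
  have hBA := mul_le_mul_of_nonneg_left hA_le hB
  have hBe := mul_le_mul_of_nonneg_left he hB
  have hBρ := mul_le_mul_of_nonneg_left hρ_one hB
  nlinarith [sq_nonneg B]

lemma doubled_points_mem (hB : 0 ≤ B) {m d : ℝ} (hm : m ∈ Icc (-1 : ℝ) 1)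
    (hd : d ∈ Icc 0 (1 / (4 * (B + 1)))) :
    m + d / 2 ∈ Icc (-2 : ℝ) 2 ∧ m - d / 2 ∈ Icc (-2 : ℝ) 2 := by
  have : d ≤ 1 := hd.2.trans ((div_le_one (by positivity)).2 (by linarith))
  exact ⟨⟨by linarith [hm.1, hd.1], by linarith [hm.2]⟩,
    by linarith [hm.1], by linarith [hm.2, hd.1]⟩

lemma continuousOn_doubled (hB : 0 ≤ B)
    (hv : ContinuousOn (fun p : ℝ × ℝ => v p.1 p.2) (Icc (-2) 2 ×ˢ Icc (-1) 0)) :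
    ContinuousOn (fun p : ℝ × ℝ × ℝ => doubled B v p.1 p.2.1 p.2.2)
      (Icc (-1) 1 ×ˢ Icc 0 (1 / (4 * (B + 1))) ×ˢ Icc (-1) 0) := by
  have h_right : ContinuousOn (fun p : ℝ × ℝ × ℝ => v (p.1 + p.2.1 / 2) p.2.2)
      (Icc (-1) 1 ×ˢ Icc 0 (1 / (4 * (B + 1))) ×ˢ Icc (-1) 0) :=
    hv.comp (f := fun p : ℝ × ℝ × ℝ => (p.1 + p.2.1 / 2, p.2.2)) (by fun_prop)
      fun p hp => ⟨(doubled_points_mem hB hp.1 hp.2.1).1, hp.2.2⟩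
  have h_left : ContinuousOn (fun p : ℝ × ℝ × ℝ => v (p.1 - p.2.1 / 2) p.2.2)
      (Icc (-1) 1 ×ˢ Icc 0 (1 / (4 * (B + 1))) ×ˢ Icc (-1) 0) :=
    hv.comp (f := fun p : ℝ × ℝ × ℝ => (p.1 - p.2.1 / 2, p.2.2)) (by fun_prop)
      fun p hp => ⟨(doubled_points_mem hB hp.1 hp.2.1).2, hp.2.2⟩
  have h_cutoff : Continuous fun p : ℝ × ℝ × ℝ => (1 - p.1 ^ 2) * (1 + p.2.2) := by fun_prop
  have h_penalty : Continuous fun p : ℝ × ℝ × ℝ =>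
      (16 + 8 * B) * (p.2.1 - (B + 1) * p.2.1 ^ 2) := by fun_prop
  exact (h_cutoff.continuousOn.mul (h_right.sub h_left)).sub h_penalty.continuousOn

namespace IsLogHeatSol

lemma doubled_pos_imp (hv : IsLogHeatSol B v vz vzz vt) (hB : 0 ≤ B) {m d τ : ℝ}
    (hm : m ∈ Icc (-1 : ℝ) 1) (hd : d ∈ Icc 0 (1 / (4 * (B + 1)))) (hτ : τ ∈ Icc (-1 : ℝ) 0)
    (hpos : 0 < doubled B v m d τ) :
    m ∈ Ioo (-1 : ℝ) 1 ∧ d ∈ Ioo 0 (1 / (4 * (B + 1))) ∧ -1 < τ ∧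
      v (m - d / 2) τ < v (m + d / 2) τ := by
  obtain ⟨hx, hy⟩ := doubled_points_mem hB hm hd
  set W := v (m + d / 2) τ - v (m - d / 2) τ with hW_def
  have hd_le : d * (4 * (B + 1)) ≤ 1 := (le_div_iff₀ (by positivity)).1 hd.2
  have h_penalty : 0 ≤ d - (B + 1) * d ^ 2 := by nlinarith [hd.1]
  have hm_sq : 0 ≤ 1 - m ^ 2 := by nlinarith [hm.1, hm.2]
  have hτ_nonneg : 0 ≤ 1 + τ := by linarith [hτ.1]
  have h_prod : (16 + 8 * B) * (d - (B + 1) * d ^ 2) < (1 - m ^ 2) * (1 + τ) * W := by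
    simpa [doubled] using hpos
  have h_prod_pos : 0 < (1 - m ^ 2) * (1 + τ) * W := lt_of_le_of_lt (by positivity) h_prod
  have hρ : 0 < (1 - m ^ 2) * (1 + τ) :=
    (mul_nonneg hm_sq hτ_nonneg).lt_of_ne' (left_ne_zero_of_mul h_prod_pos.ne')
  have hW : 0 < W := pos_of_mul_pos_right h_prod_pos hρ.le
  have hW_lt : W < 1 / 2 := by linarith [hv.le_half ⟨hx, hτ⟩, hv.pos ⟨hy, hτ⟩]
  have hρ_one : (1 - m ^ 2) * (1 + τ) ≤ 1 := by nlinarith [hτ.2, sq_nonneg m]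
  have hm_lt : m ^ 2 < 1 := by
    linarith [hm_sq.lt_of_ne' (left_ne_zero_of_mul hρ.ne')]
  refine ⟨abs_lt.1 ((sq_lt_one_iff_abs_lt_one m).1 hm_lt), ⟨hd.1.lt_of_ne ?_, hd.2.lt_of_ne ?_⟩,
    ?_, sub_pos.1 hW⟩
  · rintro rfl
    simp [hW_def] at hW
  · intro h_eq
    have h_one : d * (4 * (B + 1)) = 1 := (eq_div_iff (by positivity)).1 h_eq
    nlinarith [hd.1]
  · linarith [hτ_nonneg.lt_of_ne' (right_ne_zero_of_mul hρ.ne')]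

lemma hasDerivAt_doubled_midpoint (hv : IsLogHeatSol B v vz vzz vt) {m d τ : ℝ}
    (hx : m + d / 2 ∈ Icc (-2 : ℝ) 2) (hy : m - d / 2 ∈ Icc (-2 : ℝ) 2)
    (hτ : τ ∈ Icc (-1 : ℝ) 0) :
    HasDerivAt (fun m => doubled B v m d τ)
      (-(2 * m) * (1 + τ) * (v (m + d / 2) τ - v (m - d / 2) τ)
        + (1 - m ^ 2) * (1 + τ) * (vz (m + d / 2) τ - vz (m - d / 2) τ)) m := by
  have h_cutoff : HasDerivAt (fun m : ℝ => (1 - m ^ 2) * (1 + τ)) (-(2 * m) * (1 + τ)) m := by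
    simpa using ((hasDerivAt_pow 2 m).const_sub 1).mul_const (1 + τ)
  have h_right := (hv.hasDerivAt_y ⟨hx, hτ⟩).comp_add_const m (d / 2)
  have h_left := (hv.hasDerivAt_y ⟨hy, hτ⟩).comp_sub_const m (d / 2)
  exact (h_cutoff.mul (h_right.sub h_left)).sub_const _

lemma hasParabolicDerivOn_doubled (hv : IsLogHeatSol B v vz vzz vt) (hB : 0 ≤ B) {m : ℝ}
    (hm : m ∈ Icc (-1 : ℝ) 1) :
    HasParabolicDerivOn (doubled B v m)
      (fun d τ => (1 - m ^ 2) * (1 + τ) * (1 / 2 * (vz (m + d / 2) τ + vz (m - d / 2) τ))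
        - (16 + 8 * B) * (1 - 2 * (B + 1) * d))
      (fun d τ => (1 - m ^ 2) * (1 + τ) * (1 / 4 * (vzz (m + d / 2) τ - vzz (m - d / 2) τ))
        + 2 * (B + 1) * (16 + 8 * B))
      (fun d τ => (1 - m ^ 2) * (v (m + d / 2) τ - v (m - d / 2) τ)
        + (1 - m ^ 2) * (1 + τ) * (vt (m + d / 2) τ - vt (m - d / 2) τ))
      (Icc 0 (1 / (4 * (B + 1))) ×ˢ Icc (-1) 0) := by
  have h_right := hv.comp_affine (Ω' := Icc 0 (1 / (4 * (B + 1))) ×ˢ Icc (-1) 0) m (1 / 2) 0 1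
    fun p hp =>
      ⟨by simpa [div_eq_inv_mul] using (doubled_points_mem hB hm hp.1).1,
      by simpa using hp.2⟩
  have h_left := hv.comp_affine (Ω' := Icc 0 (1 / (4 * (B + 1))) ×ˢ Icc (-1) 0) m (-1 / 2) 0 1
    fun p hp =>
      ⟨by simpa [div_eq_inv_mul, ← sub_eq_add_neg] using (doubled_points_mem hB hm hp.1).2,
      by simpa using hp.2⟩
  have h_cutoff (τ : ℝ) : HasDerivAt (fun τ => (1 - m ^ 2) * (1 + τ)) (1 - m ^ 2) τ := by
    simpa using ((hasDerivAt_id τ).const_add 1).const_mul (1 - m ^ 2)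
  have h_penalty (d : ℝ) : HasDerivAt (fun d : ℝ => (16 + 8 * B) * (d - (B + 1) * d ^ 2))
      ((16 + 8 * B) * (1 - 2 * (B + 1) * d)) d :=
    (((hasDerivAt_id d).sub ((hasDerivAt_pow 2 d).const_mul (B + 1))).const_mul
      (16 + 8 * B)).congr_deriv (by norm_num; ring_nf; simp)
  have h_penalty' (d : ℝ) : HasDerivAt (fun d : ℝ => (16 + 8 * B) * (1 - 2 * (B + 1) * d))
      (-(2 * (B + 1) * (16 + 8 * B))) d :=
    ((((hasDerivAt_id d).const_mul (2 * (B + 1))).const_sub 1).const_mul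
      (16 + 8 * B)).congr_deriv (by ring)
  have h_all := ((h_right.sub h_left).time_mul fun _ τ _ => h_cutoff τ).sub
    (hasParabolicDerivOn_of_space h_penalty h_penalty')
  convert h_all using 1
  · funext d τ
    simp only [doubled]
    ring_nf
  all_goals
    funext d τ
    ring_nf

lemma heat_sub_bounds (hv : IsLogHeatSol B v vz vzz vt) (hB : 0 ≤ B) {z τ : ℝ}
    (hp : (z, τ) ∈ Icc (-2 : ℝ) 2 ×ˢ Icc (-1 : ℝ) 0) :
    vt z τ - vzz z τ
        ≤ ((1 / v z τ) ^ 2 - 2 * (1 / v z τ)) * vz z τ ^ 2 + B * |vz z τ| + B / 4 ∧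
      ((1 / v z τ) ^ 2 - 2 * (1 / v z τ)) * vz z τ ^ 2 - B * |vz z τ| - B / 4
        ≤ vt z τ - vzz z τ := by
  have h_sq : v z τ ^ 2 ≤ 1 / 4 := by nlinarith [hv.pos hp, hv.le_half hp]
  have h_coeff : (1 / v z τ) ^ 2 - 2 * (1 / v z τ) = 1 / v z τ ^ 2 - 2 / v z τ := by ring
  have h_abs := abs_le.1 (hv.abs_heat_sub_le hp)
  have hB_sq := mul_le_mul_of_nonneg_left h_sq hB
  rw [h_coeff]
  constructor <;> linarith [h_abs.1, h_abs.2]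

lemma false_of_stationary (hv : IsLogHeatSol B v vz vzz vt) (hB : 0 ≤ B) {x y τ ρ ρm ρt p : ℝ}
    (hx : (x, τ) ∈ Icc (-2 : ℝ) 2 ×ˢ Icc (-1 : ℝ) 0)
    (hy : (y, τ) ∈ Icc (-2 : ℝ) 2 ×ˢ Icc (-1 : ℝ) 0)
    (hlt : v y τ < v x τ) (hρ : 0 < ρ) (hρ_one : ρ ≤ 1) (hρm : |ρm| ≤ 2) (hρt : ρt ≤ 1)
    (hp : p ∈ Icc (1 / 2 : ℝ) 1)
    (h_mid : ρm * (v x τ - v y τ) + ρ * (vz x τ - vz y τ) = 0)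
    (h_dist : ρ * (1 / 2 * (vz x τ + vz y τ)) - (16 + 8 * B) * p = 0)
    (h_dist₂ : ρ * (1 / 4 * (vzz x τ - vzz y τ)) + 2 * (B + 1) * (16 + 8 * B) ≤ 0)
    (h_time : 0 ≤ ρt * (v x τ - v y τ) + ρ * (vt x τ - vt y τ)) : False := by
  have hx_pos := hv.pos hx
  have hy_pos := hv.pos hy
  have hW : 0 < v x τ - v y τ := sub_pos.2 hlt
  have h_two_le {z : ℝ} (hz : (z, τ) ∈ Icc (-2 : ℝ) 2 ×ˢ Icc (-1 : ℝ) 0) : 2 ≤ 1 / v z τ :=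
    (le_div_iff₀ (hv.pos hz)).2 (by linarith [hv.le_half hz])
  have h_inv_sub : 1 / v x τ - 1 / v y τ = -((v x τ - v y τ) * (1 / v x τ * (1 / v y τ))) := by
    field_simp
    ring
  have h_abs : ρ * |(vz x τ - vz y τ) / 2| ≤ v x τ - v y τ := by
    have h_eq : ρ * ((vz x τ - vz y τ) / 2) = -ρm / 2 * (v x τ - v y τ) := by linarith
    rw [← abs_of_pos hρ, ← abs_mul, h_eq, abs_mul, abs_of_pos hW, abs_div, abs_neg, abs_two]
    exact mul_le_of_le_one_left hW.le (by linarith)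
  have hx_plus : (vz x τ + vz y τ) / 2 + (vz x τ - vz y τ) / 2 = vz x τ := by ring
  have hy_minus : (vz x τ + vz y τ) / 2 - (vz x τ - vz y τ) / 2 = vz y τ := by ring
  exact doubling_contradiction hB (h_two_le hx) (h_two_le hy) hW h_inv_sub hρ hρ_one h_abs
    (A := (vz x τ + vz y τ) / 2) (by nlinarith [hp.1]) (by nlinarith [hp.2])
    (X := vzz x τ) (Y := vzz y τ) (by linarith) (T := vt x τ) (S := vt y τ)
    (by linarith [mul_le_of_le_one_left hW.le hρt])
    (by rw [hx_plus]; exact (hv.heat_sub_bounds hB hx).1)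
    (by rw [hy_minus]; exact (hv.heat_sub_bounds hB hy).2)

lemma doubled_nonpos (hv : IsLogHeatSol B v vz vzz vt) (hB : 0 ≤ B) :
    ∀ p ∈ Icc (-1 : ℝ) 1 ×ˢ Icc 0 (1 / (4 * (B + 1))) ×ˢ Icc (-1 : ℝ) 0,
      doubled B v p.1 p.2.1 p.2.2 ≤ 0 := by
  intro p₁ hp₁
  by_contra! hpos₁
  obtain ⟨⟨m, d, τ⟩, ⟨hm, hd, hτ⟩, hmax⟩ :=
    (isCompact_Icc.prod (isCompact_Icc.prod isCompact_Icc)).exists_isMaxOn ⟨p₁, hp₁⟩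
      (continuousOn_doubled hB hv.continuousOn)
  dsimp only at hm hd hτ
  obtain ⟨hm_int, hd_int, hτ_gt, hlt⟩ :=
    hv.doubled_pos_imp hB hm hd hτ (hpos₁.trans_le (hmax hp₁))
  obtain ⟨hx, hy⟩ := doubled_points_mem hB hm hd
  have h_mid : IsLocalMax (fun m => doubled B v m d τ) m := by
    filter_upwards [Icc_mem_nhds hm_int.1 hm_int.2] with m' hm'
    exact hmax (a := (m', d, τ)) ⟨hm', hd, hτ⟩
  have h_mid_zero := h_mid.hasDerivAt_eq_zero (hv.hasDerivAt_doubled_midpoint hx hy hτ)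
  obtain ⟨h_dist, h_dist₂, h_time⟩ := (hv.hasParabolicDerivOn_doubled hB hm).derivs_of_isMaxOn
    (fun p hp => hmax (a := (m, p)) ⟨hm, hp⟩) ⟨hd, hτ⟩
    (isParabolicInterior_Icc_prod_Icc hd_int ⟨hτ_gt, hτ.2⟩)
  have hm_sq : 0 < 1 - m ^ 2 := by nlinarith [hm_int.1, hm_int.2]
  have hτ_pos : 0 < 1 + τ := by linarith
  have hd_le : d * (4 * (B + 1)) ≤ 1 := (le_div_iff₀ (by positivity)).1 hd.2
  refine hv.false_of_stationary hB ⟨hx, hτ⟩ ⟨hy, hτ⟩ hlt (mul_pos hm_sq hτ_pos)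
    (by nlinarith [hτ.2, sq_nonneg m]) ?_ (by linarith [sq_nonneg m])
    ⟨by linarith, by nlinarith [hd.1]⟩ h_mid_zero h_dist h_dist₂ h_time
  rw [abs_le]
  constructor <;> nlinarith [hm.1, hm.2, hτ.2]

lemma le_of_doubled (hv : IsLogHeatSol B v vz vzz vt) (hB : 0 ≤ B) : vz 0 0 ≤ 16 + 8 * B := by
  have h_half : HasDerivAt (fun d : ℝ => d / 2) (1 / 2) 0 := (hasDerivAt_id _).div_const 2
  have h_center : HasDerivAt (fun z => v z 0) (vz 0 0) 0 := hv.hasDerivAt_y (by norm_num)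
  have h_deriv : HasDerivAt (fun d : ℝ => v (d / 2) 0 - v (-(d / 2)) 0) (vz 0 0) 0 := by
    have h_right := HasDerivAt.comp_of_eq (0 : ℝ) h_center h_half (by norm_num)
    have h_left := HasDerivAt.comp_of_eq (0 : ℝ) h_center h_half.neg (by norm_num)
    exact (h_right.sub h_left).congr_deriv (by ring)
  have h_slope : Tendsto (fun d : ℝ => d⁻¹ * (v (d / 2) 0 - v (-(d / 2)) 0)) (𝓝[>] 0)
      (𝓝 (vz 0 0)) := by simpa using h_deriv.tendsto_slope_zero_right
  refine le_of_tendsto h_slope ?_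
  have h_range : (0 : ℝ) < 1 / (4 * (B + 1)) := by positivity
  filter_upwards [Ioo_mem_nhdsGT h_range] with d hd
  have h_nonpos := hv.doubled_nonpos hB (0, d, 0) ⟨by norm_num, ⟨hd.1.le, hd.2.le⟩, by norm_num⟩
  norm_num [doubled] at h_nonpos
  rw [inv_mul_le_iff₀ hd.1]
  nlinarith [mul_nonneg (by linarith : 0 ≤ 16 + 8 * B) (by positivity : 0 ≤ (B + 1) * d ^ 2)]

lemma reflect (hv : IsLogHeatSol B v vz vzz vt) :
    IsLogHeatSol B (fun z τ => v (-z) τ) (fun z τ => -vz (-z) τ) (fun z τ => vzz (-z) τ)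
      (fun z τ => vt (-z) τ) := by
  have h_maps : ∀ ⦃z τ : ℝ⦄, (z, τ) ∈ Icc (-2 : ℝ) 2 ×ˢ Icc (-1 : ℝ) 0 →
      (-z, τ) ∈ Icc (-2 : ℝ) 2 ×ˢ Icc (-1 : ℝ) 0 := fun z τ hp =>
    ⟨⟨by linarith [hp.1.2], by linarith [hp.1.1]⟩, hp.2⟩
  refine ⟨?_, fun z τ hp => hv.pos (h_maps hp), fun z τ hp => hv.le_half (h_maps hp),
    fun z τ hp => by simpa using hv.abs_heat_sub_le (h_maps hp)⟩
  have h_affine : MapsTo (fun p : ℝ × ℝ => (0 + -1 * p.1, 0 + 1 * p.2))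
      (Icc (-2 : ℝ) 2 ×ˢ Icc (-1 : ℝ) 0) (Icc (-2 : ℝ) 2 ×ˢ Icc (-1 : ℝ) 0) := fun p hp => by
    simpa only [zero_add, neg_one_mul, one_mul] using h_maps hp
  simpa using hv.comp_affine 0 (-1) 0 1 h_affine

lemma abs_deriv_center_le (hv : IsLogHeatSol B v vz vzz vt) (hB : 0 ≤ B) :
    |vz 0 0| ≤ 16 + 8 * B :=
  abs_le'.2 ⟨hv.le_of_doubled hB, by simpa using hv.reflect.le_of_doubled hB⟩

end IsLogHeatSol

end Doubling

section Rescaling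

variable {u uy uyy ut : ℝ → ℝ → ℝ} {Ω : Set (ℝ × ℝ)}

lemma HasParabolicDerivOn.inv_two_add_log_sub (hu : HasParabolicDerivOn u uy uyy ut Ω) (L : ℝ)
    (hpos : ∀ ⦃y t⦄, (y, t) ∈ Ω → 0 < u y t)
    (hlog : ∀ ⦃y t⦄, (y, t) ∈ Ω → log (u y t) ≤ L) :
    HasParabolicDerivOn (fun y t => (2 + (L - log (u y t)))⁻¹)
      (fun y t => uy y t / (u y t * (2 + (L - log (u y t))) ^ 2))
      (fun y t => uyy y t / (u y t * (2 + (L - log (u y t))) ^ 2)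
        - uy y t ^ 2 * ((2 + (L - log (u y t))) ^ 2 - 2 * (2 + (L - log (u y t))))
          / (u y t ^ 2 * (2 + (L - log (u y t))) ^ 4))
      (fun y t => ut y t / (u y t * (2 + (L - log (u y t))) ^ 2)) Ω := by
  have hQ ⦃y t⦄ (hp : (y, t) ∈ Ω) : 0 < 2 + (L - log (u y t)) := by linarith [hlog hp]
  have hQy ⦃y t⦄ (hp : (y, t) ∈ Ω) :
      HasDerivAt (fun z => 2 + (L - log (u z t))) (-(uy y t / u y t)) y :=
    (((hu.hasDerivAt_y hp).log (hpos hp).ne').const_sub L).const_add 2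
  have hQt ⦃y t⦄ (hp : (y, t) ∈ Ω) :
      HasDerivAt (fun s => 2 + (L - log (u y s))) (-(ut y t / u y t)) t :=
    (((hu.hasDerivAt_t hp).log (hpos hp).ne').const_sub L).const_add 2
  refine ⟨?_, fun y t hp => ?_, fun y t hp => ?_, fun y t hp => ?_⟩
  · have h_log := hu.continuousOn.log fun p hp => (hpos hp).ne'
    exact (continuousOn_const.add (continuousOn_const.sub h_log)).inv₀ fun p hp => (hQ hp).ne'
  · refine ((hQy hp).inv (hQ hp).ne').congr_deriv ?_
    rw [neg_neg, div_div]
  · have hu₀ := (hpos hp).ne'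
    have hQ₀ := (hQ hp).ne'
    have h_den := (hu.hasDerivAt_y hp).mul ((hQy hp).pow 2)
    refine ((hu.hasDerivAt_yy hp).div h_den (mul_ne_zero hu₀ (pow_ne_zero 2 hQ₀))).congr_deriv ?_
    simp only [Pi.mul_apply, Pi.pow_apply]
    field_simp
    ring
  · refine ((hQt hp).inv (hQ hp).ne').congr_deriv ?_
    rw [neg_neg, div_div]

lemma abs_heat_sub_inv_le {B U Q D E F : ℝ} (hU : 0 < U) (hQ : 0 < Q)
    (h : |F - E| ≤ B * |D| + B * U) :
    |F / (U * Q ^ 2) - (E / (U * Q ^ 2) - D ^ 2 * (Q ^ 2 - 2 * Q) / (U ^ 2 * Q ^ 4))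
        - (1 / Q⁻¹ ^ 2 - 2 / Q⁻¹) * (D / (U * Q ^ 2)) ^ 2|
      ≤ B * |D / (U * Q ^ 2)| + B * Q⁻¹ ^ 2 := by
  have h_den : 0 < U * Q ^ 2 := by positivity
  have h_left : F / (U * Q ^ 2) - (E / (U * Q ^ 2) - D ^ 2 * (Q ^ 2 - 2 * Q) / (U ^ 2 * Q ^ 4))
      - (1 / Q⁻¹ ^ 2 - 2 / Q⁻¹) * (D / (U * Q ^ 2)) ^ 2 = (F - E) / (U * Q ^ 2) := by
    field_simp
    ring
  have h_right : B * |D / (U * Q ^ 2)| + B * Q⁻¹ ^ 2 = (B * |D| + B * U) / (U * Q ^ 2) := by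
    rw [abs_div, abs_of_pos h_den]
    field_simp
  rw [h_left, h_right, abs_div, abs_of_pos h_den]
  exact div_le_div_of_nonneg_right h h_den.le

/-- The form of the lower order terms on `u` is invariant under parabolic rescaling. -/
lemma HasParabolicDerivOn.log_gradient_estimate {B y₀ t₀ l M : ℝ} (hB : 0 ≤ B)
    (hl : 0 < l)
    (hu : HasParabolicDerivOn u uy uyy ut
      (Icc (y₀ - 2 * l) (y₀ + 2 * l) ×ˢ Icc (t₀ - l ^ 2) t₀))
    (hpos : ∀ ⦃y t⦄, (y, t) ∈ Icc (y₀ - 2 * l) (y₀ + 2 * l) ×ˢ Icc (t₀ - l ^ 2) t₀ → 0 < u y t)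
    (hle : ∀ ⦃y t⦄, (y, t) ∈ Icc (y₀ - 2 * l) (y₀ + 2 * l) ×ˢ Icc (t₀ - l ^ 2) t₀ → u y t ≤ M)
    (heq : ∀ ⦃y t⦄, (y, t) ∈ Icc (y₀ - 2 * l) (y₀ + 2 * l) ×ˢ Icc (t₀ - l ^ 2) t₀ →
      l ^ 2 * |ut y t - uyy y t| ≤ B * (l * |uy y t|) + B * u y t) :
    l * |uy y₀ t₀| ≤ (16 + 8 * B) * (u y₀ t₀ * (2 + (log M - log (u y₀ t₀))) ^ 2) := by
  have h_maps : MapsTo (fun p : ℝ × ℝ => (y₀ + l * p.1, t₀ + l ^ 2 * p.2))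
      (Icc (-2) 2 ×ˢ Icc (-1) 0)
      (Icc (y₀ - 2 * l) (y₀ + 2 * l) ×ˢ Icc (t₀ - l ^ 2) t₀) := fun p hp =>
    ⟨⟨by nlinarith [hp.1.1], by nlinarith [hp.1.2]⟩,
      by nlinarith [hp.2.1, sq_nonneg l], by nlinarith [hp.2.2, sq_nonneg l]⟩
  have h_log ⦃y t⦄ (hp : (y, t) ∈ Icc (y₀ - 2 * l) (y₀ + 2 * l) ×ˢ Icc (t₀ - l ^ 2) t₀) :
      log (u y t) ≤ log M := log_le_log (hpos hp) (hle hp)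
  have h_sol := (hu.comp_affine y₀ l t₀ (l ^ 2) h_maps).inv_two_add_log_sub (log M)
    (fun z τ hp => hpos (h_maps hp)) fun z τ hp => h_log (h_maps hp)
  have h_two_le ⦃z τ⦄ (hp : (z, τ) ∈ Icc (-2 : ℝ) 2 ×ˢ Icc (-1 : ℝ) 0) :
      2 ≤ 2 + (log M - log (u (y₀ + l * z) (t₀ + l ^ 2 * τ))) := by linarith [h_log (h_maps hp)]
  have h_log_heat : IsLogHeatSol B _ _ _ _ := ⟨h_sol,
    fun z τ hp => inv_pos.2 (two_pos.trans_le (h_two_le hp)),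
    fun z τ hp => by simpa using inv_anti₀ two_pos (h_two_le hp),
    fun z τ hp => abs_heat_sub_inv_le (hpos (h_maps hp)) (two_pos.trans_le (h_two_le hp)) (by
      rw [← mul_sub, abs_mul, abs_mul, abs_of_pos hl, abs_of_nonneg (sq_nonneg l)]
      exact heq (h_maps hp))⟩
  have h_center := h_log_heat.abs_deriv_center_le hB
  simp only [mul_zero, add_zero] at h_center
  have hu₀ : 0 < u y₀ t₀ := by simpa using hpos (h_maps (x := (0, 0)) (by norm_num))
  have hQ₀ : 2 ≤ 2 + (log M - log (u y₀ t₀)) := by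
    simpa using h_two_le (z := 0) (τ := 0) (by norm_num)
  have h_den : 0 < u y₀ t₀ * (2 + (log M - log (u y₀ t₀))) ^ 2 := by positivity
  rwa [abs_div, abs_of_pos h_den, div_le_iff₀ h_den, abs_mul, abs_of_pos hl] at h_center

end Rescaling

/-! ### The equation in the logarithmic variable -/

/-- The coefficient of `∂_y g` in the equation for `g y t = n (exp y) t`. -/
noncomputable def logDrift (g : ℝ → ℝ → ℝ) (y t : ℝ) : ℝ :=
  exp y - 1 + 2 * exp (-y) * g y t

/-- A bounded nonnegative solution in the logarithmic variable `y = log x`, so that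
`g y t = n (exp y) t`, with `x² n → 0` at infinity. -/
structure LogSol (g gy gyy gt : ℝ → ℝ → ℝ) (M : ℝ) : Prop
    extends HasParabolicDerivOn g gy gyy gt (univ ×ˢ Ioi 0) where
  pde : ∀ y t, 0 < t → gt y t = gyy y t + logDrift g y t * gy y t + (2 * exp y - 2) * g y t
  nonneg : ∀ y t, 0 < t → 0 ≤ g y t
  le : ∀ y t, 0 < t → g y t ≤ M
  one_le : 1 ≤ M
  decay : ∀ T ε, 0 < T → 0 < ε → ∃ Y, ∀ y, Y ≤ y → ∀ t, 0 < t → t < T → exp (2 * y) * g y t < ε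

namespace IsKompSol

variable {n : ℝ → ℝ → ℝ} {n₀ : ℝ → ℝ} {x t : ℝ}

lemma hasDerivAt_kompFlux (h : IsKompSol n n₀) (hx : 0 < x) (ht : 0 < t) :
    HasDerivAt (kompFlux fun z => n z t)
      (x ^ 2 * deriv (deriv fun z => n z t) x + (x ^ 2 + 2 * n x t) * deriv (fun z => n z t) x
        + (2 * x - 2) * n x t) x := by
  have hn := (h.diff_x t ht x hx).hasDerivAt
  have hn' := (h.diff_xx t ht x hx).hasDerivAt
  have hsq : HasDerivAt (fun x : ℝ => x ^ 2) (2 * x) x := by simpa using hasDerivAt_pow 2 x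
  have hquad : HasDerivAt (fun x : ℝ => x ^ 2 - 2 * x) (2 * x - 2) x :=
    hsq.sub (by simpa using (hasDerivAt_id x).const_mul 2)
  refine (((hsq.mul hn').add (hquad.mul hn)).add (hn.pow 2)).congr_deriv ?_
  simp only [Nat.cast_ofNat, Nat.add_one_sub_one, pow_one]
  ring

lemma hasDerivAt_time (h : IsKompSol n n₀) (hx : 0 < x) (ht : 0 < t) :
    HasDerivAt (fun τ => n x τ) (deriv (kompFlux fun z => n z t) x) t :=
  h.pde x hx t ht ▸ (h.diff_t x hx t ht).hasDerivAt

lemma hasParabolicDerivOn_log (h : IsKompSol n n₀) :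
    HasParabolicDerivOn (fun y t => n (exp y) t)
      (fun y t => exp y * deriv (fun z => n z t) (exp y))
      (fun y t => exp y * deriv (fun z => n z t) (exp y)
        + exp y ^ 2 * deriv (deriv fun z => n z t) (exp y))
      (fun y t => deriv (kompFlux fun z => n z t) (exp y)) (univ ×ˢ Ioi 0) where
  continuousOn := h.contOn.comp (f := fun p : ℝ × ℝ => (exp p.1, p.2)) (by fun_prop)
    fun p hp => ⟨exp_pos _, hp.2⟩
  hasDerivAt_y y t hp :=
    ((h.diff_x t hp.2 _ (exp_pos y)).hasDerivAt.comp y (Real.hasDerivAt_exp y)).congr_deriv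
      (mul_comm _ _)
  hasDerivAt_yy y t hp := by
    have hcomp := (h.diff_xx t hp.2 _ (exp_pos y)).hasDerivAt.comp y (Real.hasDerivAt_exp y)
    refine ((Real.hasDerivAt_exp y).mul hcomp).congr_deriv ?_
    simp only [Function.comp_apply]
    ring
  hasDerivAt_t y _ hp := h.hasDerivAt_time (exp_pos y) hp.2

lemma exists_logSol (h : IsKompSol n n₀) :
    ∃ M, LogSol (fun y t => n (exp y) t) (fun y t => exp y * deriv (fun z => n z t) (exp y))
      (fun y t => exp y * deriv (fun z => n z t) (exp y)
        + exp y ^ 2 * deriv (deriv fun z => n z t) (exp y))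
      (fun y t => deriv (kompFlux fun z => n z t) (exp y)) M := by
  obtain ⟨M, hM⟩ := h.bounded
  refine ⟨max M 1, h.hasParabolicDerivOn_log, fun y t ht => ?_,
    fun y t ht => h.nonneg _ t (exp_pos y) ht,
    fun y t ht => (hM _ t (exp_pos y) ht).trans (le_max_left _ _), le_max_right _ _,
    fun T ε hT hε => ?_⟩
  · rw [(h.hasDerivAt_kompFlux (exp_pos y) ht).deriv, logDrift, Real.exp_neg]
    have := exp_pos y
    field_simp
    ring
  · obtain ⟨R, hR, hdecay⟩ := h.decay T hT ε hε
    refine ⟨log R, fun y hy t ht htT => ?_⟩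
    have := hdecay (exp y) ((Real.log_le_iff_le_exp hR).1 hy) t ht.le htT
    rwa [← Real.exp_nat_mul] at this

end IsKompSol

namespace LogSol

variable {g gy gyy gt s sy syy st : ℝ → ℝ → ℝ} {M t₀ t₁ : ℝ} {Ω : Set (ℝ × ℝ)}

lemma hasDerivAt_fst (S : LogSol g gy gyy gt M) (y : ℝ) {t : ℝ} (ht : 0 < t) :
    HasDerivAt (fun z => g z t) (gy y t) y :=
  S.hasDerivAt_y ⟨trivial, ht⟩

lemma hasDerivAt_snd (S : LogSol g gy gyy gt M) (y : ℝ) {t : ℝ} (ht : 0 < t) :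
    HasDerivAt (fun s => g y s) (gt y t) t :=
  S.hasDerivAt_t ⟨trivial, ht⟩

lemma mono_pos (S : LogSol g gy gyy gt M) (hΩ : ∀ p ∈ Ω, 0 < p.2) :
    HasParabolicDerivOn g gy gyy gt Ω :=
  S.toHasParabolicDerivOn.mono fun p hp => ⟨trivial, hΩ p hp⟩

lemma neg_one_le_logDrift (S : LogSol g gy gyy gt M) (y : ℝ) {t : ℝ} (ht : 0 < t) :
    -1 ≤ logDrift g y t := by
  have := S.nonneg y t ht
  have : 0 ≤ exp y + 2 * exp (-y) * g y t := by positivity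
  rw [logDrift]
  linarith

lemma continuousOn_logDrift (S : LogSol g gy gyy gt M) :
    ContinuousOn (fun p : ℝ × ℝ => logDrift g p.1 p.2) (univ ×ˢ Ioi 0) := by
  unfold logDrift
  exact ContinuousOn.add (by fun_prop) (ContinuousOn.mul (by fun_prop) S.continuousOn)

lemma second_order_add_le_gt (S : LogSol g gy gyy gt M) (y : ℝ) {t : ℝ} (ht : 0 < t) :
    gyy y t + logDrift g y t * gy y t + -2 * g y t ≤ gt y t := by
  have : 0 ≤ exp y * g y t := mul_nonneg (exp_pos y).le (S.nonneg y t ht)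
  linarith [S.pde y t ht]

lemma exists_le_mul_exp (S : LogSol g gy gyy gt M) {T ε : ℝ} (hT : 0 < T) (hε : 0 < ε) :
    ∃ Z, ∀ y t, Z ≤ |y| → 0 < t → t < T → g y t ≤ ε * exp (-2 * y) := by
  obtain ⟨Y, hY⟩ := S.decay T ε hT hε
  refine ⟨max Y (M / ε), fun y t hy ht htT => ?_⟩
  obtain ⟨hYy, hMy⟩ := max_le_iff.1 hy
  rcases le_total 0 y with hy₀ | hy₀
  · rw [abs_of_nonneg hy₀] at hYy
    have := hY y hYy t ht htT
    rw [neg_mul, exp_neg, ← div_eq_mul_inv, le_div_iff₀' (exp_pos _)]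
    exact this.le
  · rw [abs_of_nonpos hy₀, div_le_iff₀' hε] at hMy
    calc g y t ≤ M := S.le y t ht
      _ ≤ ε * -y := hMy
      _ ≤ ε * exp (-2 * y) := by gcongr; linarith [add_one_le_exp (-2 * y)]

/-- The comparison principle on unbounded domains: adding `ε x⁻² e^{5t}`, `x = e^y`, makes `s` a
strict supersolution that exceeds `g` for large `|y|`. -/
lemma le_of_supersolution (S : LogSol g gy gyy gt M) (hΩ : IsClosed Ω) (ht₀ : 0 < t₀)
    (hΩ_time : ∀ p ∈ Ω, p.2 ∈ Icc t₀ t₁) (hs : HasParabolicDerivOn s sy syy st Ω)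
    (hs_nonneg : ∀ p ∈ Ω, 0 ≤ s p.1 p.2)
    (hs_super : ∀ y t, (y, t) ∈ Ω → s y t < g y t → IsParabolicInterior Ω y t ∧
      syy y t + logDrift g y t * sy y t + (2 * exp y - 2) * s y t ≤ st y t) :
    ∀ y t, (y, t) ∈ Ω → g y t ≤ s y t := by
  intro y₁ τ₁ hmem₁
  have hpos : ∀ p ∈ Ω, 0 < p.2 := fun p hp => ht₀.trans_le (hΩ_time p hp).1
  have hT : 0 < t₁ + 1 := by linarith [hpos _ hmem₁, (hΩ_time _ hmem₁).2]
  suffices key : ∀ ε > 0, g y₁ τ₁ ≤ s y₁ τ₁ + ε * exp (-2 * y₁ + 5 * τ₁) by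
    refine le_of_forall_pos_le_add fun δ hδ => ?_
    have := key (δ / exp (-2 * y₁ + 5 * τ₁)) (by positivity)
    rwa [div_mul_cancel₀ _ (exp_pos _).ne'] at this
  intro ε hε
  obtain ⟨Z₀, hZ₀⟩ := S.exists_le_mul_exp hT hε
  set Z := max Z₀ |y₁|
  set K := Ω ∩ Prod.fst ⁻¹' Icc (-Z) Z
  have hK : IsCompact K := (isCompact_Icc.prod isCompact_Icc).of_isClosed_subset
    (hΩ.inter (isClosed_Icc.preimage continuous_fst)) fun p hp => ⟨hp.2, hΩ_time p hp.1⟩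
  have hv := (hs.mono inter_subset_left).add
    ((hasParabolicDerivOn_exp (-2) 5 K).const_mul ε)
  refine (S.mono_pos fun p hp => hpos p hp.1).le_of_strict_supersolution (b := logDrift g)
    (c := fun y _ => 2 * exp y - 2) hv hK
    (fun p hp => add_pos_of_nonneg_of_pos (hs_nonneg p hp.1) (by positivity))
    (fun y t hp => (S.pde y t (hpos _ hp.1)).le) (fun y t hp hlt => ?_) y₁ τ₁
    ⟨hmem₁, abs_le.1 (le_max_right _ _)⟩
  have ht := hpos _ hp.1
  have he : 0 < ε * exp (-2 * y + 5 * t) := by positivity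
  obtain ⟨hint, hsuper⟩ := hs_super y t hp.1 (by linarith)
  have hyZ : |y| < Z := by
    by_contra! hle
    have hg := hZ₀ y t ((le_max_left _ _).trans hle) ht (by linarith [(hΩ_time _ hp.1).2])
    have hexp : ε * exp (-2 * y) ≤ ε * exp (-2 * y + 5 * t) := by gcongr; linarith
    linarith [hs_nonneg _ hp.1]
  have hy := abs_lt.1 hyZ
  refine ⟨hint.inter ⟨Icc_mem_nhds hy.1 hy.2, .of_forall fun _ => ⟨hy.1.le, hy.2.le⟩⟩, ?_⟩
  have : 0 ≤ exp (-y) * g y t * (ε * exp (-2 * y + 5 * t)) :=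
    mul_nonneg (mul_nonneg (exp_pos _).le (S.nonneg y t ht)) he.le
  simp only [logDrift] at hsuper ⊢
  linarith

end LogSol

/-! ### The strong maximum principle -/

/-- A bump of radius `r` about the moving centre `c t`, damped at the rate `Λ`. -/
noncomputable def bump (ε Λ r : ℝ) (c : ℝ → ℝ) (t₀ y t : ℝ) : ℝ :=
  ε * exp (-Λ * (t - t₀)) * (r ^ 2 - (y - c t) ^ 2) ^ 2

/-- The space-time tube of radius `r` about the path `c`, over the times `[t₀, t₁]`. -/
def tube (c : ℝ → ℝ) (r t₀ t₁ : ℝ) : Set (ℝ × ℝ) :=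
  {p | |p.1 - c p.2| ≤ r ∧ p.2 ∈ Icc t₀ t₁}

section StrongMaximumPrinciple

variable {c : ℝ → ℝ} {ε Λ r σ B C t₀ t₁ y y₀ y₁ t : ℝ} {b g gy gyy gt : ℝ → ℝ → ℝ}

lemma isCompact_tube (hc : Continuous c) : IsCompact (tube c r t₀ t₁) := by
  have himage : tube c r t₀ t₁ =
      (fun p : ℝ × ℝ => (c p.2 + p.1, p.2)) '' (Icc (-r) r ×ˢ Icc t₀ t₁) := by
    ext ⟨y, t⟩
    constructor
    · exact fun h => ⟨(y - c t, t), ⟨abs_le.1 h.1, h.2⟩, by simp⟩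
    · rintro ⟨⟨ρ, τ⟩, h, hp⟩
      obtain ⟨rfl, rfl⟩ := Prod.mk.inj hp
      exact ⟨by simpa using abs_le.2 h.1, h.2⟩
  rw [himage]
  exact (isCompact_Icc.prod isCompact_Icc).image (by fun_prop)

lemma isParabolicInterior_tube (hc : Continuous c) (hy : |y - c t| < r) (ht : t ∈ Ioc t₀ t₁) :
    IsParabolicInterior (tube c r t₀ t₁) y t := by
  have hy_cont : Continuous fun z => |z - c t| := by fun_prop
  have ht_cont : Continuous fun τ => |y - c τ| := by fun_prop
  constructor
  · filter_upwards [hy_cont.continuousAt.eventually (gt_mem_nhds hy)] with z hz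
    exact ⟨hz.le, Ioc_subset_Icc_self ht⟩
  · filter_upwards [nhdsWithin_le_nhds (ht_cont.continuousAt.eventually (gt_mem_nhds hy)),
      Ico_mem_nhdsLT ht.1] with τ hτ hτt
    exact ⟨hτ.le, hτt.1, hτt.2.le.trans ht.2⟩

lemma hasParabolicDerivOn_bump (hc : ∀ t, HasDerivAt c σ t) (Ω : Set (ℝ × ℝ)) :
    HasParabolicDerivOn (bump ε Λ r c t₀)
      (fun y t => ε * exp (-Λ * (t - t₀)) * (-4 * (y - c t) * (r ^ 2 - (y - c t) ^ 2)))
      (fun y t => ε * exp (-Λ * (t - t₀)) * (12 * (y - c t) ^ 2 - 4 * r ^ 2))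
      (fun y t => ε * exp (-Λ * (t - t₀)) * (-Λ * (r ^ 2 - (y - c t) ^ 2) ^ 2
        + 4 * σ * (y - c t) * (r ^ 2 - (y - c t) ^ 2))) Ω where
  continuousOn := by
    have : Continuous c := continuous_iff_continuousAt.2 fun t => (hc t).continuousAt
    simp only [bump]
    fun_prop
  hasDerivAt_y y t _ := by
    have hsq := ((((hasDerivAt_id y).sub_const (c t)).pow 2).const_sub (r ^ 2)).pow 2
    refine (hsq.const_mul (ε * exp (-Λ * (t - t₀)))).congr_deriv ?_
    simp only [id, Pi.pow_apply, Nat.cast_ofNat, Nat.add_one_sub_one, pow_one]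
    ring
  hasDerivAt_yy y t _ := by
    have hlin := (hasDerivAt_id y).sub_const (c t)
    refine (((hlin.const_mul (-4)).mul ((hlin.pow 2).const_sub (r ^ 2))).const_mul
      (ε * exp (-Λ * (t - t₀)))).congr_deriv ?_
    simp only [id, Pi.pow_apply, Nat.cast_ofNat, Nat.add_one_sub_one, pow_one]
    ring
  hasDerivAt_t y t _ := by
    have hexp := ((((hasDerivAt_id t).sub_const t₀).const_mul (-Λ)).exp).const_mul ε
    have hsq := ((((hc t).const_sub y).pow 2).const_sub (r ^ 2)).pow 2
    refine (hexp.mul hsq).congr_deriv ?_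
    simp only [id, Pi.pow_apply, Nat.cast_ofNat, Nat.add_one_sub_one, pow_one]
    ring

/-- With `ρ` the distance to the centre, `b` the drift and `σ` the velocity of the centre: where
`r² - ρ²` is small the positive term `12 ρ² - 4 r²` dominates, elsewhere the damping `Λ` does. -/
lemma bump_strict_subsolution {ρ b : ℝ} (hr : 0 < r) (hr_one : r ≤ 1) (hρ : |ρ| ≤ r)
    (hb : |b| ≤ B) (hΛ : Λ = C + (12 + 4 * |σ| + 4 * B) ^ 2 / (8 * r ^ 2)) :
    -Λ * (r ^ 2 - ρ ^ 2) ^ 2 + 4 * σ * ρ * (r ^ 2 - ρ ^ 2)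
      < (12 * ρ ^ 2 - 4 * r ^ 2) + b * (-4 * ρ * (r ^ 2 - ρ ^ 2))
        - C * (r ^ 2 - ρ ^ 2) ^ 2 := by
  obtain ⟨P, hP⟩ : ∃ P, P = 12 + 4 * |σ| + 4 * B := ⟨_, rfl⟩
  obtain ⟨a, ha⟩ : ∃ a, a = r ^ 2 - ρ ^ 2 := ⟨_, rfl⟩
  have ha_nonneg : 0 ≤ a := ha ▸ sub_nonneg.2 (sq_le_sq' (abs_le.1 hρ).1 (abs_le.1 hρ).2)
  have htransport : (σ + b) * ρ ≤ |σ| + B := by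
    have hσb : |σ + b| ≤ |σ| + B := (abs_add_le _ _).trans (by linarith)
    calc (σ + b) * ρ ≤ |σ + b| * |ρ| := abs_mul (σ + b) ρ ▸ le_abs_self _
      _ ≤ (|σ| + B) * 1 :=
          mul_le_mul hσb (hρ.trans hr_one) (abs_nonneg _) ((abs_nonneg _).trans hσb)
      _ = |σ| + B := mul_one _
  have hquad : 0 < 8 * r ^ 2 - P * a + P ^ 2 / (8 * r ^ 2) * a ^ 2 := by
    have hsq : 8 * r ^ 2 - P * a + P ^ 2 / (8 * r ^ 2) * a ^ 2
        = ((P * a - 4 * r ^ 2) ^ 2 + 48 * r ^ 4) / (8 * r ^ 2) := by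
      field_simp
      ring
    rw [hsq]
    positivity
  have hρ_sq : ρ ^ 2 = r ^ 2 - a := by rw [ha]; ring
  rw [← hP] at hΛ
  rw [← ha, hρ_sq, hΛ]
  rw [hP] at hquad ⊢
  linarith only [mul_le_mul_of_nonneg_right htransport ha_nonneg, hquad]

lemma HasParabolicDerivOn.bump_le (hg : HasParabolicDerivOn g gy gyy gt (tube c r t₀ t₁))
    (hc : ∀ t, HasDerivAt c σ t) (hr : 0 < r) (hr_one : r ≤ 1) (hC : 0 ≤ C) (hε : 0 < ε)
    (hb : ∀ p ∈ tube c r t₀ t₁, |b p.1 p.2| ≤ B)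
    (hΛ : Λ = C + (12 + 4 * |σ| + 4 * B) ^ 2 / (8 * r ^ 2))
    (hg_nonneg : ∀ p ∈ tube c r t₀ t₁, 0 ≤ g p.1 p.2)
    (hg_super : ∀ y t, (y, t) ∈ tube c r t₀ t₁ →
      gyy y t + b y t * gy y t + -C * g y t ≤ gt y t)
    (hbase : ∀ z, |z - c t₀| ≤ r → ε ≤ g z t₀) (hy : (y, t) ∈ tube c r t₀ t₁) :
    bump ε Λ r c t₀ y t ≤ g y t := by
  have hc_cont : Continuous c := continuous_iff_continuousAt.2 fun t => (hc t).continuousAt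
  refine hg.le_of_strict_subsolution (hasParabolicDerivOn_bump hc _) (isCompact_tube hc_cont)
    (f := fun y t => -C * g y t) hg_super (fun y t hp hlt => ?_) y t hy
  have hρ : |y - c t| < r := by
    refine hp.1.lt_of_ne fun h => ?_
    have : bump ε Λ r c t₀ y t = 0 := by rw [bump, ← sq_abs (y - c t), h]; ring
    linarith [hg_nonneg _ hp]
  have ht : t₀ < t := by
    refine hp.2.1.lt_of_ne fun h => ?_
    subst h
    have hsq : (r ^ 2 - (y - c t₀) ^ 2) ^ 2 ≤ 1 := by
      have := sq_le_sq' (abs_le.1 hp.1).1 (abs_le.1 hp.1).2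
      exact pow_le_one₀ (sub_nonneg.2 this) (by nlinarith [sq_nonneg (y - c t₀)])
    have : bump ε Λ r c t₀ y t₀ ≤ ε := by
      simpa [bump] using mul_le_of_le_one_right hε.le hsq
    linarith [hbase y hp.1]
  refine ⟨isParabolicInterior_tube hc_cont hρ ⟨ht, hp.2.2⟩, ?_⟩
  have hE : 0 < ε * exp (-Λ * (t - t₀)) := by positivity
  have hsub := mul_lt_mul_of_pos_left (bump_strict_subsolution hr hr_one hp.1 (hb _ hp) hΛ) hE
  have hCg := mul_le_mul_of_nonneg_left hlt.le hC
  rw [bump] at hCg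
  linarith only [hsub, hCg]

/-- Positivity propagates instantly to all of space: compare with a bump carried along the segment
joining the two space-time points. -/
lemma HasParabolicDerivOn.pos_of_pos
    (hg : HasParabolicDerivOn g gy gyy gt (univ ×ˢ Icc t₀ t₁))
    (hb : ContinuousOn (fun p : ℝ × ℝ => b p.1 p.2) (univ ×ˢ Icc t₀ t₁)) (hC : 0 ≤ C)
    (hg_nonneg : ∀ y, ∀ t ∈ Icc t₀ t₁, 0 ≤ g y t)
    (hg_super : ∀ y, ∀ t ∈ Icc t₀ t₁, gyy y t + b y t * gy y t + -C * g y t ≤ gt y t)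
    (h : t₀ < t₁) (hpos : 0 < g y₀ t₀) : 0 < g y₁ t₁ := by
  obtain ⟨r, ⟨hr, hr_one⟩, hgr⟩ :
      ∃ r, (0 < r ∧ r ≤ 1) ∧ ∀ y, |y - y₀| ≤ r → g y₀ t₀ / 2 ≤ g y t₀ := by
    have hcont := (hg.hasDerivAt_y (y := y₀) ⟨trivial, left_mem_Icc.2 h.le⟩).continuousAt
    obtain ⟨r, hr, hball⟩ := Metric.nhds_basis_closedBall.eventually_iff.1
      (hcont.eventually (lt_mem_nhds (half_lt_self hpos)))
    exact ⟨min r 1, ⟨by positivity, min_le_right _ _⟩, fun y hy =>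
      (hball (Metric.mem_closedBall.2 (hy.trans (min_le_left _ _)))).le⟩
  set σ := (y₁ - y₀) / (t₁ - t₀)
  set c : ℝ → ℝ := fun t => y₀ + σ * (t - t₀)
  have hc : ∀ t, HasDerivAt c σ t := fun t =>
    ((((hasDerivAt_id t).sub_const t₀).const_mul σ).const_add y₀).congr_deriv (mul_one σ)
  have hc₀ : c t₀ = y₀ := by simp [c]
  have hc₁ : c t₁ = y₁ := by simp [c, σ, div_mul_cancel₀ _ (sub_pos.2 h).ne']
  have htube : tube c r t₀ t₁ ⊆ univ ×ˢ Icc t₀ t₁ := fun p hp => ⟨trivial, hp.2⟩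
  obtain ⟨B, hB⟩ := (isCompact_tube (c := c) (by fun_prop)).exists_bound_of_continuousOn
    (hb.mono htube)
  have hle := (hg.mono htube).bump_le hc hr hr_one hC (half_pos hpos) hB rfl
    (fun p hp => hg_nonneg p.1 p.2 hp.2) (fun y t hp => hg_super y t hp.2)
    (by rwa [hc₀]) (y := y₁) (t := t₁) ⟨by simp [hc₁, hr.le], h.le, le_rfl⟩
  refine lt_of_lt_of_le ?_ hle
  rw [bump, hc₁, sub_self, zero_pow two_ne_zero, sub_zero]
  positivity

end StrongMaximumPrinciple

namespace LogSol

variable {g gy gyy gt : ℝ → ℝ → ℝ} {M : ℝ}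

lemma pos_of_pos (S : LogSol g gy gyy gt M) {y₀ t₀ y₁ t₁ : ℝ} (ht₀ : 0 < t₀) (h : t₀ < t₁)
    (hpos : 0 < g y₀ t₀) : 0 < g y₁ t₁ :=
  have htime : univ ×ˢ Icc t₀ t₁ ⊆ (univ ×ˢ Ioi 0 : Set (ℝ × ℝ)) :=
    prod_mono_right fun _ ht => ht₀.trans_le ht.1
  (S.mono htime).pos_of_pos (S.continuousOn_logDrift.mono htime) zero_le_two
    (fun y t ht => S.nonneg y t (ht₀.trans_le ht.1))
    (fun y _ ht => S.second_order_add_le_gt y (ht₀.trans_le ht.1)) h hpos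

lemma eq_zero_of_eq_zero (S : LogSol g gy gyy gt M) {t₀ : ℝ} (ht₀ : 0 < t₀)
    (hzero : ∀ y, g y t₀ = 0) {y t : ℝ} (h : t₀ ≤ t) : g y t = 0 := by
  have hs := hasParabolicDerivOn_of_space (Ω := univ ×ˢ Icc t₀ t)
    (fun y => hasDerivAt_const y (0 : ℝ)) (fun y => hasDerivAt_const y (0 : ℝ))
  refine le_antisymm ?_ (S.nonneg y t (ht₀.trans_le h))
  refine S.le_of_supersolution (isClosed_univ.prod isClosed_Icc) ht₀ (fun p hp => hp.2) hs
    (fun _ _ => le_rfl) (fun z τ hp hlt => ⟨⟨.of_forall fun _ => ⟨trivial, hp.2⟩, ?_⟩, by simp⟩)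
    y t ⟨trivial, h, le_rfl⟩
  have hτ : t₀ < τ := by
    refine hp.2.1.lt_of_ne ?_
    rintro rfl
    exact hlt.ne' (hzero z)
  filter_upwards [Ico_mem_nhdsLT hτ] with τ' hτ'
  exact ⟨trivial, hτ'.1, hτ'.2.le.trans hp.2.2⟩

lemma eq_zero_or_pos (S : LogSol g gy gyy gt M) :
    (∀ y t, 0 < t → g y t = 0) ∨ (∀ y t, 0 < t → 0 < g y t) := by
  refine or_iff_not_imp_right.2 fun h => ?_
  push Not at h
  obtain ⟨y₁, t₁, ht₁, hle⟩ := h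
  have hbefore : ∀ y t, 0 < t → t < t₁ → g y t = 0 := by
    intro y t ht htt
    by_contra hne
    have : 0 < g y₁ t₁ := S.pos_of_pos ht htt ((S.nonneg y t ht).lt_of_ne (Ne.symm hne))
    linarith
  intro y t ht
  rcases lt_or_ge t t₁ with htt | htt
  · exact hbefore y t ht htt
  · exact S.eq_zero_of_eq_zero (half_pos ht₁)
      (fun z => hbefore z _ (half_pos ht₁) (half_lt_self ht₁)) (by linarith)

end LogSol

/-! ### Decay at infinity and a Gaussian lower bound near zero -/

/-- The majorant of the solution in the variable `y = log x`: bounded near `x = 0`, of order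
`x⁻ᵏ` at infinity. -/
noncomputable def majorant (k : ℕ) (A y : ℝ) : ℝ :=
  A * exp (-k * max y 0)

/-- The barrier `M (κ / (x (t - t₀)))ᵏ`, `x = e^y`, for the decay at infinity. -/
noncomputable def decayBarrier (k : ℕ) (M κ t₀ y t : ℝ) : ℝ :=
  M * (κ / ((t - t₀) * exp y)) ^ k

section DecayBarrier

variable {k : ℕ} {M κ t₀ y t : ℝ} {Ω : Set (ℝ × ℝ)}

lemma decayBarrier_eq_mul_exp :
    decayBarrier k M κ t₀ y t = (κ / (t - t₀)) ^ k * (M * exp (-k * y + 0 * t)) := by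
  have hexp : exp (-k * y + 0 * t) = (exp y ^ k)⁻¹ := by
    rw [← exp_nat_mul, ← exp_neg]
    ring_nf
  rw [decayBarrier, hexp, ← div_div, div_pow _ (exp y), div_eq_mul_inv]
  ring

lemma le_decayBarrier (hM : 0 ≤ M) (ht : t₀ < t) (h : (t - t₀) * exp y ≤ κ) :
    M ≤ decayBarrier k M κ t₀ y t := by
  have : 0 < (t - t₀) * exp y := mul_pos (sub_pos.2 ht) (exp_pos y)
  exact le_mul_of_one_le_right hM (one_le_pow₀ ((one_le_div this).2 h))

lemma hasParabolicDerivOn_decayBarrier (hΩ : ∀ p ∈ Ω, t₀ < p.2) :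
    HasParabolicDerivOn (decayBarrier k M κ t₀)
      (fun y t => -k * decayBarrier k M κ t₀ y t) (fun y t => k ^ 2 * decayBarrier k M κ t₀ y t)
      (fun y t => -k / (t - t₀) * decayBarrier k M κ t₀ y t) Ω := by
  have htime : ∀ ⦃y t⦄, (y, t) ∈ Ω → HasDerivAt (fun t => (κ / (t - t₀)) ^ k)
      (-k / (t - t₀) * (κ / (t - t₀)) ^ k) t := by
    intro y t hp
    have ht : t - t₀ ≠ 0 := (sub_pos.2 (hΩ _ hp)).ne'
    refine ((((hasDerivAt_id t).sub_const t₀).fun_inv ht).const_mul κ |>.fun_pow k).congr_deriv ?_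
    rcases k with - | k
    · simp
    · simp only [id, Nat.cast_add, Nat.cast_one, Nat.add_one_sub_one, pow_succ]
      field_simp
  have h := ((hasParabolicDerivOn_exp (-k) 0 Ω).const_mul M).time_mul htime
  simp_rw [show decayBarrier k M κ t₀ = fun y t => (κ / (t - t₀)) ^ k * (M * exp (-k * y + 0 * t))
    from funext₂ fun _ _ => decayBarrier_eq_mul_exp]
  convert h using 3 <;> ring

end DecayBarrier

namespace LogSol

variable {g gy gyy gt : ℝ → ℝ → ℝ} {M t₀ t₁ t₂ : ℝ}

lemma decayBarrier_supersolution (S : LogSol g gy gyy gt M) {k : ℕ} (hk : 3 ≤ k) {κ s y t : ℝ}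
    (ht₀ : 0 < t₀) (hκ : κ = k + (k ^ 2 + k) * (t₁ - t₀)) (ht : t ∈ Ioc t₀ t₁)
    (hκt : κ ≤ (t - t₀) * exp y) (hs : 0 ≤ s) :
    k ^ 2 * s + logDrift g y t * (-k * s) + (2 * exp y - 2) * s ≤ -k / (t - t₀) * s := by
  have hk' : (3 : ℝ) ≤ k := by exact_mod_cast hk
  have hg : 0 ≤ exp (-y) * g y t := mul_nonneg (exp_pos _).le (S.nonneg y t (ht₀.trans ht.1))
  have hτ : 0 < t - t₀ := sub_pos.2 ht.1
  have hcoeff : k ^ 2 + k - 2 - (k - 2) * exp y ≤ -k / (t - t₀) := by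
    rw [le_div_iff₀ hτ]
    have hτ_le : (k ^ 2 + k) * (t - t₀) ≤ (k ^ 2 + k) * (t₁ - t₀) := by gcongr; exact ht.2
    have hexp : (t - t₀) * exp y ≤ (k - 2) * ((t - t₀) * exp y) :=
      le_mul_of_one_le_left (by positivity) (by linarith)
    linarith
  have hnonlin : 0 ≤ k * (exp (-y) * g y t) * s := by positivity
  rw [logDrift]
  linarith [mul_le_mul_of_nonneg_right hcoeff hs]

/-- The drift `x` is strong enough to absorb the time derivative of the barrier wherever
`x (t - t₀)` is large. -/
lemma le_decayBarrier (S : LogSol g gy gyy gt M) {k : ℕ} (hk : 3 ≤ k) {κ : ℝ} (ht₀ : 0 < t₀)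
    (hκ : κ = k + (k ^ 2 + k) * (t₁ - t₀)) (y : ℝ) {t : ℝ} (ht : t ∈ Ioc t₀ t₁) :
    g y t ≤ decayBarrier k M κ t₀ y t := by
  have hM : 0 ≤ M := zero_le_one.trans S.one_le
  have ht₁ : t₀ < t₁ := ht.1.trans_le ht.2
  have hκ_pos : 0 < κ := by
    have := sub_pos.2 ht₁
    have : 0 < k := by lia
    rw [hκ]
    positivity
  have hinner : ∀ z τ, t₀ < τ → 0 < τ → decayBarrier k M κ t₀ z τ < g z τ → κ < (τ - t₀) * exp z :=
    fun z τ hτ hτ₀ hlt => not_le.1 fun hle =>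
      hlt.not_ge ((S.le z τ hτ₀).trans (_root_.le_decayBarrier hM hτ hle))
  by_contra! hcon
  set Ω : Set (ℝ × ℝ) := {p | p.2 ∈ Icc t₀ t₁ ∧ κ ≤ (p.2 - t₀) * exp p.1}
  have hΩ_closed : IsClosed Ω := (isClosed_Icc.preimage continuous_snd).inter
    (isClosed_le continuous_const (g := fun p : ℝ × ℝ => (p.2 - t₀) * exp p.1) (by fun_prop))
  have hΩ_time : ∀ p ∈ Ω, t₀ < p.2 := fun p hp =>
    sub_pos.1 (pos_of_mul_pos_left (hκ_pos.trans_le hp.2) (exp_pos _).le)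
  have hbarrier_nonneg : ∀ p ∈ Ω, 0 ≤ decayBarrier k M κ t₀ p.1 p.2 := fun p hp => by
    have := sub_pos.2 (hΩ_time p hp)
    unfold decayBarrier
    positivity
  refine hcon.not_ge (S.le_of_supersolution hΩ_closed ht₀ (fun p hp => hp.1)
    (hasParabolicDerivOn_decayBarrier hΩ_time) hbarrier_nonneg (fun z τ hp hlt => ⟨⟨?_, ?_⟩,
      S.decayBarrier_supersolution hk ht₀ hκ ⟨hΩ_time _ hp, hp.1.2⟩ hp.2 (hbarrier_nonneg _ hp)⟩)
    y t ⟨Ioc_subset_Icc_self ht, (hinner y t ht.1 (ht₀.trans ht.1) hcon).le⟩)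
  · have : Continuous fun z => (τ - t₀) * exp z := by fun_prop
    have hκτ := hinner z τ (hΩ_time _ hp) (ht₀.trans (hΩ_time _ hp)) hlt
    filter_upwards [this.continuousAt.eventually (lt_mem_nhds hκτ)] with z' hz' using ⟨hp.1, hz'.le⟩
  · have : Continuous fun τ => (τ - t₀) * exp z := by fun_prop
    have hκτ := hinner z τ (hΩ_time _ hp) (ht₀.trans (hΩ_time _ hp)) hlt
    filter_upwards [nhdsWithin_le_nhds (this.continuousAt.eventually (lt_mem_nhds hκτ)),
      Ico_mem_nhdsLT (hΩ_time _ hp)] with τ' hτ' hmem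
    exact ⟨⟨hmem.1, hmem.2.le.trans hp.1.2⟩, hτ'.le⟩

lemma exists_le_majorant (S : LogSol g gy gyy gt M) {k : ℕ} (hk : 3 ≤ k) (ht₁ : 0 < t₁)
    (t₂ : ℝ) : ∃ A, 1 ≤ A ∧ ∀ y, ∀ t ∈ Icc t₁ t₂, g y t ≤ majorant k A y := by
  have hM : 0 < M := zero_lt_one.trans_le S.one_le
  obtain ⟨κ, hκ⟩ : ∃ κ, κ = k + (k ^ 2 + k) * (t₂ - t₁ / 2) := ⟨_, rfl⟩
  refine ⟨max M (M * (κ / (t₁ / 2)) ^ k), S.one_le.trans (le_max_left _ _), fun y t ht => ?_⟩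
  have ht₀ : t₁ / 2 < t := by linarith [ht.1]
  rcases le_total y 0 with hy | hy
  · rw [majorant, max_eq_right hy, mul_zero, exp_zero, mul_one]
    exact (S.le y t (by linarith)).trans (le_max_left _ _)
  · have hκ_nonneg : 0 ≤ κ := by
      rw [hκ]
      have : 0 ≤ t₂ - t₁ / 2 := by linarith [ht.2]
      positivity
    calc g y t ≤ decayBarrier k M κ (t₁ / 2) y t :=
          S.le_decayBarrier hk (half_pos ht₁) hκ y ⟨ht₀, ht.2⟩
      _ = M * (κ / (t - t₁ / 2)) ^ k * exp (-k * y) := by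
          rw [decayBarrier_eq_mul_exp, zero_mul, add_zero]
          ring
      _ ≤ M * (κ / (t₁ / 2)) ^ k * exp (-k * y) := by
          gcongr
          linarith [ht.1]
      _ ≤ majorant k (max M (M * (κ / (t₁ / 2)) ^ k)) y := by
          rw [majorant, max_eq_left hy]
          gcongr
          exact le_max_right _ _

end LogSol

/-- The barrier `ε exp (-k (1 - y)² / (t - t₀))` for the lower bound near `x = 0`. -/
noncomputable def gaussian (ε k t₀ y t : ℝ) : ℝ :=
  ε * exp (-(k / (t - t₀)) * (1 - y) ^ 2)

section Gaussian

variable {ε k κ L b t₀ t y : ℝ} {Ω : Set (ℝ × ℝ)}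

lemma gaussian_pos (hε : 0 < ε) : 0 < gaussian ε k t₀ y t :=
  mul_pos hε (exp_pos _)

lemma hasParabolicDerivOn_gaussian (hΩ : ∀ p ∈ Ω, t₀ < p.2) :
    HasParabolicDerivOn (gaussian ε k t₀)
      (fun y t => gaussian ε k t₀ y t * (2 * (k / (t - t₀)) * (1 - y)))
      (fun y t => gaussian ε k t₀ y t
        * (4 * (k / (t - t₀)) ^ 2 * (1 - y) ^ 2 - 2 * (k / (t - t₀))))
      (fun y t => gaussian ε k t₀ y t * (k / (t - t₀) ^ 2 * (1 - y) ^ 2)) Ω := by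
  have hy (y t : ℝ) : HasDerivAt (fun y => gaussian ε k t₀ y t)
      (gaussian ε k t₀ y t * (2 * (k / (t - t₀)) * (1 - y))) y := by
    have hsq := (((hasDerivAt_id y).const_sub 1).fun_pow 2).const_mul (-(k / (t - t₀)))
    refine (hsq.exp.const_mul ε).congr_deriv ?_
    simp only [gaussian, id, Nat.cast_ofNat, Nat.add_one_sub_one, pow_one]
    ring
  refine ⟨?_, fun y t _ => hy y t, fun y t _ => ?_, fun y t hp => ?_⟩
  · have : ContinuousOn (fun p : ℝ × ℝ => k / (p.2 - t₀)) Ω :=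
      ContinuousOn.div (by fun_prop) (by fun_prop) fun p hp => (sub_pos.2 (hΩ p hp)).ne'
    exact continuousOn_const.mul (this.neg.mul (by fun_prop)).rexp
  · refine ((hy y t).mul (((hasDerivAt_id y).const_sub 1).const_mul (2 * (k / (t - t₀))))
      ).congr_deriv ?_
    simp only [id]
    ring
  · have hinv := (((hasDerivAt_id t).sub_const t₀).fun_inv (sub_pos.2 (hΩ _ hp)).ne').const_mul k
    refine ((hinv.neg.mul_const ((1 - y) ^ 2)).exp.const_mul ε).congr_deriv ?_
    simp only [gaussian, id, div_eq_mul_inv, Pi.neg_apply]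
    ring

lemma gaussian_strict_subsolution (hk : 1 ≤ k) (hκ : 4 ≤ κ) (hL : 1 ≤ L) (hb : -1 ≤ b) :
    κ ^ 2 / k * L ^ 2 < 4 * κ ^ 2 * L ^ 2 - 2 * κ + b * (2 * κ * L) + -2 := by
  have htime : κ ^ 2 / k * L ^ 2 ≤ κ ^ 2 * L ^ 2 := by
    gcongr
    exact div_le_self (by positivity) hk
  have hdrift : -1 * (2 * κ * L) ≤ b * (2 * κ * L) := by gcongr
  have hκL : κ ≤ κ * L := le_mul_of_one_le_right (by linarith) hL
  nlinarith only [htime, hdrift, hκL, hκ]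

lemma exists_bound_of_lt_gaussian {η : ℝ} (hε : 0 < ε) (hη : 0 < η) (hk : 1 ≤ k) :
    ∃ R, 0 < R ∧ ∀ y t, y ≤ 0 → t₀ < t → t - t₀ ≤ k → η < gaussian ε k t₀ y t →
      1 - y < R ∧ R⁻¹ < t - t₀ := by
  refine ⟨max 1 (log (ε / η)), by positivity, fun y t hy ht htk hlt => ?_⟩
  have hτ : 0 < t - t₀ := sub_pos.2 ht
  have hexponent : k / (t - t₀) * (1 - y) ^ 2 < max 1 (log (ε / η)) := by
    refine lt_max_of_lt_right ?_
    rw [gaussian, ← div_lt_iff₀' hε, ← log_lt_iff_lt_exp (by positivity), ← inv_div,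
      log_inv] at hlt
    linarith
  have hκ : 1 ≤ k / (t - t₀) := (one_le_div hτ).2 htk
  have hL : 1 ≤ 1 - y := by linarith
  refine ⟨lt_of_le_of_lt ?_ hexponent, inv_lt_of_inv_lt₀ hτ (lt_of_le_of_lt ?_ hexponent)⟩
  · exact (le_self_pow₀ hL two_ne_zero).trans (le_mul_of_one_le_left (by positivity) hκ)
  · calc (t - t₀)⁻¹ ≤ k / (t - t₀) := by rw [← one_div]; gcongr
      _ ≤ k / (t - t₀) * (1 - y) ^ 2 :=
        le_mul_of_one_le_right (by positivity) (one_le_pow₀ hL)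

end Gaussian

namespace LogSol

variable {g gy gyy gt : ℝ → ℝ → ℝ} {M : ℝ}

lemma gaussian_le (S : LogSol g gy gyy gt M) {ε k t₀ t₁ y t : ℝ} (hε : 0 < ε) (ht₀ : 0 < t₀)
    (hk : k = 1 + 4 * (t₁ - t₀)) (hεg : ∀ t ∈ Icc t₀ t₁, ε ≤ g 0 t) (hy : y ≤ 0)
    (ht : t ∈ Ioc t₀ t₁) : gaussian ε k t₀ y t ≤ g y t := by
  have hk_one : 1 ≤ k := by linarith [ht.1, ht.2]
  refine le_of_forall_pos_le_add fun η hη => ?_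
  obtain ⟨R, hR, hbound⟩ := exists_bound_of_lt_gaussian (t₀ := t₀) hε hη hk_one
  set d := min (t - t₀) R⁻¹
  have hd : 0 < d := lt_min (sub_pos.2 ht.1) (by positivity)
  set K := Icc (-max R (-y)) 0 ×ˢ Icc (t₀ + d) t₁
  have hK : ∀ p ∈ K, t₀ < p.2 := fun p hp => by linarith [hp.2.1]
  have hs := (hasParabolicDerivOn_gaussian (ε := ε) (k := k) hK).sub
    (hasParabolicDerivOn_of_space (fun y => hasDerivAt_const y η) fun y => hasDerivAt_const y 0)
  rw [← sub_le_iff_le_add]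
  refine (S.mono_pos fun p hp => ht₀.trans (hK p hp)).le_of_strict_subsolution
    (f := fun z τ => -2 * g z τ) hs (isCompact_Icc.prod isCompact_Icc)
    (fun z τ hp => S.second_order_add_le_gt z (ht₀.trans (hK _ hp))) (fun z τ hp hlt => ?_) y t
    ⟨⟨neg_le.1 (le_max_right _ _), hy⟩, by linarith [min_le_left (t - t₀) R⁻¹], ht.2⟩
  have hτ : 0 < τ - t₀ := sub_pos.2 (hK _ hp)
  have hτ₀ : 0 < τ := ht₀.trans (hK _ hp)
  have hτ_le : τ ≤ t₁ := hp.2.2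
  have hg := S.nonneg z τ hτ₀
  obtain ⟨hzR, hτR⟩ := hbound z τ hp.1.2 (hK _ hp) (by linarith) (by linarith)
  have hκ : 4 ≤ k / (τ - t₀) := by rw [le_div_iff₀ hτ]; linarith
  have hz : z < 0 := by
    refine hp.1.2.lt_of_ne ?_
    rintro rfl
    have : gaussian ε k t₀ 0 τ ≤ ε :=
      mul_le_of_le_one_right hε.le (exp_le_one_iff.2 (by linarith))
    linarith [hεg τ ⟨by linarith, hτ_le⟩]
  refine ⟨isParabolicInterior_Icc_prod_Icc ⟨by linarith [le_max_left R (-y)], hz⟩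
    ⟨by linarith [min_le_right (t - t₀) R⁻¹], hτ_le⟩, ?_⟩
  have hsub := mul_lt_mul_of_pos_left
    (gaussian_strict_subsolution hk_one hκ (by linarith : 1 ≤ 1 - z)
      (S.neg_one_le_logDrift z hτ₀)) (gaussian_pos hε : 0 < gaussian ε k t₀ z τ)
  have htime : k / (τ - t₀) ^ 2 = (k / (τ - t₀)) ^ 2 / k := by field_simp
  rw [htime]
  linarith only [hsub, hlt, hη]

lemma exists_gaussian_le (S : LogSol g gy gyy gt M) (hpos : ∀ y t, 0 < t → 0 < g y t)
    {t₁ t₂ : ℝ} (ht₁ : 0 < t₁) (h : t₁ ≤ t₂) :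
    ∃ ε κ, 0 < ε ∧ 0 < κ ∧ ∀ y ≤ 0, ∀ t ∈ Icc t₁ t₂, ε * exp (-κ * (1 - y) ^ 2) ≤ g y t := by
  have ht₀ : 0 < t₁ / 2 := half_pos ht₁
  obtain ⟨t, ht, hmin⟩ := isCompact_Icc.exists_isMinOn
    (nonempty_Icc.2 (by linarith : t₁ / 2 ≤ t₂)) (f := fun t => g 0 t)
    (fun t ht => (S.hasDerivAt_snd 0 (ht₀.trans_le ht.1)).continuousAt.continuousWithinAt)
  have hε := hpos 0 t (ht₀.trans_le ht.1)
  obtain ⟨k, hk⟩ : ∃ k, k = 1 + 4 * (t₂ - t₁ / 2) := ⟨_, rfl⟩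
  have hk_pos : 0 < k := by linarith
  refine ⟨g 0 t, k / (t₁ - t₁ / 2), hε, by rw [sub_half]; positivity, fun y hy τ hτ => ?_⟩
  refine le_trans ?_ (S.gaussian_le hε ht₀ hk (fun τ hτ => hmin hτ) hy
    ⟨by linarith [hτ.1], hτ.2⟩)
  have hτ₁ := hτ.1
  have : 0 < t₁ - t₁ / 2 := by rwa [sub_half]
  rw [gaussian]
  gcongr

end LogSol

/-! ### Gradient and time-derivative bounds -/

lemma mul_log_pow_le {u m : ℝ} (hu : 0 < u) (hum : u ≤ m) (k : ℕ) :
    u * (2 + (log m - log u)) ^ k ≤ m * (k.factorial * exp 2) := by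
  have hm : 0 < m := hu.trans_le hum
  have hlog : log u ≤ log m := log_le_log hu hum
  have hpow := Real.pow_div_factorial_le_exp (2 + (log m - log u)) (by linarith) k
  rw [div_le_iff₀ (by positivity)] at hpow
  have hexp : exp (2 + (log m - log u)) = exp 2 * (m / u) := by
    rw [exp_add, exp_sub, exp_log hm, exp_log hu]
  calc u * (2 + (log m - log u)) ^ k ≤ u * (exp (2 + (log m - log u)) * k.factorial) := by gcongr
    _ = m * (k.factorial * exp 2) := by rw [hexp]; field_simp

lemma abs_sub_le_of_hasDerivAt {f f' : ℝ → ℝ} {a h C : ℝ} (hh : 0 ≤ h)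
    (hf : ∀ z ∈ Icc a (a + h), HasDerivAt f (f' z) z) (hC : ∀ z ∈ Icc a (a + h), |f' z| ≤ C) :
    |f (a + h) - f a| ≤ C * h := by
  have hle : a ≤ a + h := by linarith
  simpa [abs_of_nonneg hh] using Convex.norm_image_sub_le_of_norm_hasDerivWithin_le
    (fun z hz => (hf z hz).hasDerivWithinAt) hC (convex_Icc a (a + h))
    (left_mem_Icc.2 hle) (right_mem_Icc.2 hle)

lemma exists_radius {t : ℝ} (ht : 0 < t) : ∃ c, 0 < c ∧ c ≤ 1 / 2 ∧ c ^ 2 ≤ t / 2 := by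
  have hc : 0 < min (1 / 2) t := lt_min one_half_pos ht
  refine ⟨min (1 / 2) t, hc, min_le_left _ _, ?_⟩
  calc min (1 / 2) t ^ 2 = min (1 / 2) t * min (1 / 2) t := sq _
    _ ≤ 1 / 2 * t := mul_le_mul (min_le_left _ _) (min_le_right _ _) hc.le (by norm_num)
    _ = t / 2 := by ring

lemma abs_two_mul_exp_sub_two_le {y Y : ℝ} (hY : |y| ≤ Y) : |2 * exp y - 2| ≤ 2 * exp Y := by
  have hy : exp y ≤ exp Y := exp_le_exp.2 ((le_abs_self y).trans hY)
  have h_one : 1 ≤ exp Y := one_le_exp ((abs_nonneg y).trans hY)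
  exact abs_le.2 ⟨by linarith [exp_pos y], by linarith⟩

lemma majorant_le {k : ℕ} {A : ℝ} (hA : 0 ≤ A) (y : ℝ) : majorant k A y ≤ A :=
  mul_le_of_le_one_right hA (exp_le_one_iff.2 (mul_nonpos_of_nonpos_of_nonneg
    (neg_nonpos.2 k.cast_nonneg) (le_max_right y 0)))

lemma majorant_le_majorant_mul_exp {k : ℕ} {A y z : ℝ} (hA : 0 ≤ A) (h : |y - z| ≤ 1) :
    majorant k A y ≤ majorant k (A * exp k) z := by
  have hmax : max z 0 ≤ max y 0 + 1 :=
    max_le (by linarith [(abs_le.1 h).1, le_max_left y 0]) (by linarith [le_max_right y 0])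
  rw [majorant, majorant, mul_assoc, ← exp_add]
  have := mul_le_mul_of_nonneg_left hmax k.cast_nonneg (α := ℝ)
  gcongr
  linarith

namespace LogSol

variable {g gy gyy gt : ℝ → ℝ → ℝ} {M t₁ t₂ : ℝ}

lemma abs_logDrift_le (S : LogSol g gy gyy gt M) {y t Y : ℝ} (ht : 0 < t) (hY : |y| ≤ Y) :
    |logDrift g y t| ≤ (2 + 2 * M) * exp Y := by
  have hy : exp y ≤ exp Y := exp_le_exp.2 ((le_abs_self y).trans hY)
  have h_one : 1 ≤ exp Y := one_le_exp ((abs_nonneg y).trans hY)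
  have hg := S.nonneg y t ht
  have hmul : exp (-y) * g y t ≤ exp Y * M :=
    mul_le_mul (exp_le_exp.2 ((neg_le_abs y).trans hY)) (S.le y t ht) hg (exp_pos Y).le
  have hmul_nonneg : 0 ≤ exp (-y) * g y t := by positivity
  rw [logDrift]
  exact abs_le.2 ⟨by linarith [exp_pos y], by linarith⟩

lemma abs_heat_le (S : LogSol g gy gyy gt M) {y t Y : ℝ} (ht : 0 < t) (hY : |y| ≤ Y) :
    |gt y t - gyy y t| ≤ (2 + 2 * M) * exp Y * |gy y t| + 2 * exp Y * g y t := by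
  calc |gt y t - gyy y t| = |logDrift g y t * gy y t + (2 * exp y - 2) * g y t| := by
        rw [S.pde y t ht]; ring_nf
    _ ≤ |logDrift g y t| * |gy y t| + |2 * exp y - 2| * g y t := by
        simpa only [abs_mul, abs_of_nonneg (S.nonneg y t ht)] using
          abs_add_le (logDrift g y t * gy y t) ((2 * exp y - 2) * g y t)
    _ ≤ (2 + 2 * M) * exp Y * |gy y t| + 2 * exp Y * g y t :=
        add_le_add (mul_le_mul_of_nonneg_right (S.abs_logDrift_le ht hY) (abs_nonneg _))
          (mul_le_mul_of_nonneg_right (abs_two_mul_exp_sub_two_le hY) (S.nonneg y t ht))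

/-- The logarithmic gradient estimate at the natural scale `c * exp (-|y₀|)` of the equation, where
drift and zero order term are bounded after rescaling. -/
lemma abs_gy_le (S : LogSol g gy gyy gt M) (hpos : ∀ y t, 0 < t → 0 < g y t) {c y₀ t₀ m : ℝ}
    (hc : 0 < c) (hc_half : c ≤ 1 / 2) (hct : c ^ 2 < t₀)
    (hm : ∀ y, |y - y₀| ≤ 1 → ∀ t ∈ Icc (t₀ - c ^ 2) t₀, g y t ≤ m) :
    |gy y₀ t₀| ≤ (16 + 8 * ((2 + 2 * M) * exp 1)) / c * exp |y₀|
      * (g y₀ t₀ * (2 + (log m - log (g y₀ t₀))) ^ 2) := by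
  have hM : 0 ≤ M := zero_le_one.trans S.one_le
  obtain ⟨l, hl⟩ : ∃ l, l = c * exp (-|y₀|) := ⟨_, rfl⟩
  have hl_pos : 0 < l := by rw [hl]; positivity
  have hlc : l ≤ c := by
    rw [hl]; exact mul_le_of_le_one_right hc.le (exp_le_one_iff.2 (by linarith [abs_nonneg y₀]))
  have hl_sq : l ^ 2 ≤ c ^ 2 := pow_le_pow_left₀ hl_pos.le hlc 2
  have hl_exp : l * exp |y₀| = c := by rw [hl, mul_assoc, ← exp_add]; simp
  have hl_exp_one : l * exp (|y₀| + 1) ≤ exp 1 := by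
    rw [exp_add, ← mul_assoc, hl_exp]
    exact mul_le_of_le_one_left (exp_pos 1).le (by linarith)
  have hy ⦃y⦄ (h : y ∈ Icc (y₀ - 2 * l) (y₀ + 2 * l)) : |y - y₀| ≤ 1 :=
    abs_le.2 ⟨by linarith [h.1], by linarith [h.2]⟩
  have ht ⦃t⦄ (h : t ∈ Icc (t₀ - l ^ 2) t₀) : 0 < t := by linarith [h.1]
  have key := (S.mono_pos fun p hp => ht hp.2).log_gradient_estimate (y₀ := y₀)
    (by positivity : 0 ≤ (2 + 2 * M) * exp 1) hl_pos (fun y t hp => hpos y t (ht hp.2))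
    (fun y t hp => hm y (hy hp.1) t ⟨by linarith [hp.2.1], hp.2.2⟩) fun y t hp => ?_
  · have := mul_le_mul_of_nonneg_left key (exp_pos |y₀|).le
    rw [← mul_assoc, mul_comm (exp |y₀|) l, hl_exp] at this
    rw [div_mul_eq_mul_div, div_mul_eq_mul_div, le_div_iff₀ hc]
    linarith
  · have h_heat := S.abs_heat_le (ht hp.2)
      (by linarith [hy hp.1, abs_sub_abs_le_abs_sub y y₀] : |y| ≤ |y₀| + 1)
    have hg := S.nonneg y t (ht hp.2)
    calc l ^ 2 * |gt y t - gyy y t|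
        ≤ l ^ 2 * ((2 + 2 * M) * exp (|y₀| + 1) * |gy y t| + 2 * exp (|y₀| + 1) * g y t) := by
          gcongr
      _ = (l * exp (|y₀| + 1)) * ((2 + 2 * M) * (l * |gy y t|) + (2 * l) * g y t) := by ring
      _ ≤ exp 1 * ((2 + 2 * M) * (l * |gy y t|) + (2 + 2 * M) * g y t) := by gcongr; linarith
      _ = _ := by ring

lemma exists_gradient_bound (S : LogSol g gy gyy gt M) (hpos : ∀ y t, 0 < t → 0 < g y t) {k : ℕ}
    (hk : 3 ≤ k) (ht₁ : 0 < t₁) (t₂ : ℝ) :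
    ∃ C A, 0 ≤ C ∧ 1 ≤ A ∧ (∀ y, ∀ t ∈ Icc t₁ t₂, g y t ≤ majorant k A y) ∧
      ∀ y, ∀ t ∈ Icc t₁ t₂, |gy y t| ≤
        C * exp |y| * (g y t * (2 + (log (majorant k A y) - log (g y t))) ^ 2) := by
  have hM : 0 ≤ M := zero_le_one.trans S.one_le
  obtain ⟨A, hA, hdecay⟩ := S.exists_le_majorant hk (half_pos ht₁) t₂
  obtain ⟨c, hc, hc_half, hct⟩ := exists_radius ht₁
  have hA_nonneg : 0 ≤ A := zero_le_one.trans hA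
  have h_near ⦃y z : ℝ⦄ (hyz : |y - z| ≤ 1) ⦃t⦄ (ht : t ∈ Icc (t₁ / 2) t₂) :
      g y t ≤ majorant k (A * exp k) z :=
    (hdecay y t ht).trans (majorant_le_majorant_mul_exp hA_nonneg hyz)
  refine ⟨(16 + 8 * ((2 + 2 * M) * exp 1)) / c, A * exp k, by positivity,
    one_le_mul_of_one_le_of_one_le hA (one_le_exp k.cast_nonneg),
    fun y t ht => h_near (by simp) ⟨by linarith [ht.1], ht.2⟩, fun y t ht => ?_⟩
  exact S.abs_gy_le hpos hc hc_half (by linarith [ht.1]) fun z hz s hs =>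
    h_near hz ⟨by linarith [hs.1, ht.1], hs.2.trans ht.2⟩

lemma exists_abs_gy_le (S : LogSol g gy gyy gt M) (hpos : ∀ y t, 0 < t → 0 < g y t)
    (ht₁ : 0 < t₁) (t₂ Y : ℝ) : ∃ L, 0 ≤ L ∧ ∀ y, |y| ≤ Y → ∀ t ∈ Icc t₁ t₂, |gy y t| ≤ L := by
  obtain ⟨C, A, hC, hA, h_maj, h_grad⟩ := S.exists_gradient_bound hpos le_rfl ht₁ t₂
  have hA_nonneg : 0 ≤ A := zero_le_one.trans hA
  refine ⟨C * exp Y * (A * (Nat.factorial 2 * exp 2)), by positivity, fun y hy t ht => ?_⟩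
  have hg := hpos y t (ht₁.trans_le ht.1)
  calc |gy y t| ≤ C * exp |y| * (g y t * (2 + (log (majorant 3 A y) - log (g y t))) ^ 2) :=
        h_grad y t ht
    _ ≤ C * exp Y * (majorant 3 A y * (Nat.factorial 2 * exp 2)) :=
        mul_le_mul (by gcongr) (mul_log_pow_le hg (h_maj y t ht) 2)
          (mul_nonneg hg.le (sq_nonneg _)) (by positivity)
    _ ≤ C * exp Y * (A * (Nat.factorial 2 * exp 2)) := by
        gcongr
        exact majorant_le hA_nonneg y

end LogSol

namespace LogSol

variable {g gy gyy gt : ℝ → ℝ → ℝ} {M L Y y t h t₁ : ℝ}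

lemma hasDerivAt_logDrift (S : LogSol g gy gyy gt M) (y : ℝ) {t : ℝ} (ht : 0 < t) :
    HasDerivAt (fun z => logDrift g z t) (exp y + 2 * exp (-y) * (gy y t - g y t)) y := by
  have hexp_neg := ((hasDerivAt_neg y).exp).const_mul 2
  refine (((Real.hasDerivAt_exp y).sub_const 1).add
    (hexp_neg.mul (S.hasDerivAt_fst y ht))).congr_deriv ?_
  ring

lemma abs_logDrift_sub_le (S : LogSol g gy gyy gt M) (ht : 0 < t) (hh : 0 ≤ h)
    (hY : ∀ z ∈ Icc y (y + h), |z| ≤ Y) (hL : ∀ z ∈ Icc y (y + h), |gy z t| ≤ L) :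
    |logDrift g (y + h) t - logDrift g y t| ≤ (1 + 2 * (L + M)) * exp Y * h := by
  refine abs_sub_le_of_hasDerivAt hh (fun z _ => S.hasDerivAt_logDrift z ht) fun z hz => ?_
  have h_sub : |gy z t - g z t| ≤ L + M :=
    (abs_sub _ _).trans (add_le_add (hL z hz)
      ((abs_of_nonneg (S.nonneg z t ht)).trans_le (S.le z t ht)))
  have h_abs : |exp z + 2 * exp (-z) * (gy z t - g z t)|
      ≤ exp z + 2 * exp (-z) * |gy z t - g z t| := by
    refine (abs_add_le _ _).trans_eq ?_
    rw [abs_mul, abs_of_pos (exp_pos z), abs_of_pos (by positivity : 0 < 2 * exp (-z))]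
  calc |exp z + 2 * exp (-z) * (gy z t - g z t)|
      ≤ exp z + 2 * exp (-z) * |gy z t - g z t| := h_abs
    _ ≤ exp Y + 2 * exp Y * (L + M) := by
        gcongr
        · exact (le_abs_self z).trans (hY z hz)
        · exact (neg_le_abs z).trans (hY z hz)
    _ = (1 + 2 * (L + M)) * exp Y := by ring

lemma abs_source_sub_le (S : LogSol g gy gyy gt M) (ht : 0 < t) (hh : 0 ≤ h)
    (hY : ∀ z ∈ Icc y (y + h), |z| ≤ Y) (hL : ∀ z ∈ Icc y (y + h), |gy z t| ≤ L) :
    |(2 * exp (y + h) - 2) * g (y + h) t - (2 * exp y - 2) * g y t|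
      ≤ 2 * (L + M) * exp Y * h := by
  refine abs_sub_le_of_hasDerivAt (f := fun z => (2 * exp z - 2) * g z t) hh
    (fun z _ => (((Real.hasDerivAt_exp z).const_mul 2).sub_const 2).mul (S.hasDerivAt_fst z ht))
    fun z hz => ?_
  calc |2 * exp z * g z t + (2 * exp z - 2) * gy z t|
      ≤ 2 * exp z * g z t + |2 * exp z - 2| * |gy z t| := by
        rw [← abs_mul]
        refine (abs_add_le _ _).trans_eq (congrArg (· + _) (abs_of_nonneg ?_))
        exact mul_nonneg (by positivity) (S.nonneg z t ht)
    _ ≤ 2 * exp Y * M + 2 * exp Y * L :=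
        add_le_add
          (mul_le_mul (by gcongr; exact (le_abs_self z).trans (hY z hz)) (S.le z t ht)
            (S.nonneg z t ht) (by positivity))
          (mul_le_mul (abs_two_mul_exp_sub_two_le (hY z hz)) (hL z hz) (abs_nonneg _)
            (by positivity))
    _ = 2 * (L + M) * exp Y := by ring

lemma abs_heat_sub_le (S : LogSol g gy gyy gt M) (ht : 0 < t) (hh : 0 ≤ h)
    (hY : ∀ z ∈ Icc y (y + h), |z| ≤ Y) (hL : ∀ z ∈ Icc y (y + h), |gy z t| ≤ L) :
    |(gt (y + h) t - gt y t) - (gyy (y + h) t - gyy y t)|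
      ≤ 4 * (1 + L + M) ^ 2 * exp Y * (|gy (y + h) t - gy y t| + h) := by
  have hM : 0 ≤ M := zero_le_one.trans S.one_le
  have hle : y ≤ y + h := by linarith
  have hL_nonneg : 0 ≤ L := (abs_nonneg _).trans (hL y (left_mem_Icc.2 hle))
  have h_drift := mul_le_mul_of_nonneg_right (S.abs_logDrift_le ht (hY y (left_mem_Icc.2 hle)))
    (abs_nonneg (gy (y + h) t - gy y t))
  have h_drift_sub := S.abs_logDrift_sub_le ht hh hY hL
  have h_drift_sub_mul := mul_le_mul h_drift_sub (hL (y + h) (right_mem_Icc.2 hle)) (abs_nonneg _)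
    ((abs_nonneg _).trans h_drift_sub)
  have h_source := S.abs_source_sub_le ht hh hY hL
  rw [← abs_mul] at h_drift h_drift_sub_mul
  have h_eq : (gt (y + h) t - gt y t) - (gyy (y + h) t - gyy y t)
      = logDrift g y t * (gy (y + h) t - gy y t)
        + (logDrift g (y + h) t - logDrift g y t) * gy (y + h) t
        + ((2 * exp (y + h) - 2) * g (y + h) t - (2 * exp y - 2) * g y t) := by
    rw [S.pde y t ht, S.pde (y + h) t ht]
    ring
  rw [h_eq]
  calc _ ≤ (2 + 2 * M) * exp Y * |gy (y + h) t - gy y t|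
          + (1 + 2 * (L + M)) * exp Y * h * L + 2 * (L + M) * exp Y * h :=
        (abs_add_three _ _ _).trans (by gcongr)
    _ = (2 + 2 * M) * (exp Y * |gy (y + h) t - gy y t|)
          + ((1 + 2 * (L + M)) * L + 2 * (L + M)) * (exp Y * h) := by ring
    _ ≤ 4 * (1 + L + M) ^ 2 * (exp Y * |gy (y + h) t - gy y t|)
          + 4 * (1 + L + M) ^ 2 * (exp Y * h) := by
        gcongr <;> nlinarith [mul_nonneg hL_nonneg hM]
    _ = _ := by ring

lemma hasParabolicDerivOn_diffQuot (S : LogSol g gy gyy gt M) (h a : ℝ) :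
    HasParabolicDerivOn (fun y t => h⁻¹ * (g (y + h) t - g y t) + a)
      (fun y t => h⁻¹ * (gy (y + h) t - gy y t)) (fun y t => h⁻¹ * (gyy (y + h) t - gyy y t))
      (fun y t => h⁻¹ * (gt (y + h) t - gt y t)) (univ ×ˢ Ioi 0) := by
  have h_shift := S.comp_affine (Ω' := univ ×ˢ Ioi 0) h 1 0 1 fun p hp => by simpa using hp
  have h_const := hasParabolicDerivOn_of_space (Ω := univ ×ˢ Ioi 0) (fun y => hasDerivAt_const y a)
    (fun y => hasDerivAt_const y (0 : ℝ))
  simpa only [one_mul, zero_add, one_pow, add_zero, add_comm h] using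
    ((h_shift.sub S.toHasParabolicDerivOn).const_mul h⁻¹).add h_const

/-- The gradient estimate is applied to the difference quotient of `g`, shifted by `L + 1` to make
it positive. -/
lemma abs_gy_sub_le (S : LogSol g gy gyy gt M) {l y₀ t₀ : ℝ} (hl : 0 < l) (hl_half : l ≤ 1 / 2)
    (hlt : l ^ 2 < t₀) (hh : 0 < h) (hh_one : h ≤ 1) (hY : |y₀| + 2 ≤ Y)
    (hL : ∀ y, |y| ≤ Y → ∀ t ∈ Icc (t₀ - l ^ 2) t₀, |gy y t| ≤ L) :
    l * |h⁻¹ * (gy (y₀ + h) t₀ - gy y₀ t₀)|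
      ≤ (16 + 8 * (4 * (1 + L + M) ^ 2 * exp Y))
        * ((2 * L + 1) * (Nat.factorial 2 * exp 2)) := by
  have h_abs ⦃y⦄ (hy : y ∈ Icc (y₀ - 2 * l) (y₀ + 2 * l)) : ∀ z ∈ Icc y (y + h), |z| ≤ Y :=
    fun z hz => abs_le.2 ⟨by linarith [neg_abs_le y₀, hy.1, hz.1],
      by linarith [le_abs_self y₀, hy.2, hz.2]⟩
  have h_pos ⦃t⦄ (ht : t ∈ Icc (t₀ - l ^ 2) t₀) : 0 < t := by linarith [ht.1]
  have h_gy ⦃y t⦄ (hp : (y, t) ∈ Icc (y₀ - 2 * l) (y₀ + 2 * l) ×ˢ Icc (t₀ - l ^ 2) t₀) :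
      ∀ z ∈ Icc y (y + h), |gy z t| ≤ L := fun z hz => hL z (h_abs hp.1 z hz) t hp.2
  have h_quot ⦃y t⦄ (hp : (y, t) ∈ Icc (y₀ - 2 * l) (y₀ + 2 * l) ×ˢ Icc (t₀ - l ^ 2) t₀) :
      |h⁻¹ * (g (y + h) t - g y t)| ≤ L := by
    rw [abs_mul, abs_of_pos (inv_pos.2 hh), inv_mul_le_iff₀ hh, mul_comm]
    exact abs_sub_le_of_hasDerivAt hh.le (fun z _ => S.hasDerivAt_fst z (h_pos hp.2)) (h_gy hp)
  have h_center : (y₀, t₀) ∈ Icc (y₀ - 2 * l) (y₀ + 2 * l) ×ˢ Icc (t₀ - l ^ 2) t₀ :=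
    ⟨⟨by linarith, by linarith⟩, by linarith [sq_nonneg l], le_rfl⟩
  have key := ((S.hasParabolicDerivOn_diffQuot h (L + 1)).mono fun p hp =>
      ⟨trivial, h_pos hp.2⟩).log_gradient_estimate (M := 2 * L + 1)
    (by positivity : 0 ≤ 4 * (1 + L + M) ^ 2 * exp Y) hl
    (fun y t hp => by linarith [(abs_le.1 (h_quot hp)).1])
    (fun y t hp => by linarith [(abs_le.1 (h_quot hp)).2]) fun y t hp => ?_
  · refine key.trans (mul_le_mul_of_nonneg_left (mul_log_pow_le ?_ ?_ 2) (by positivity))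
    · linarith [(abs_le.1 (h_quot h_center)).1]
    · linarith [(abs_le.1 (h_quot h_center)).2]
  · have h_heat := S.abs_heat_sub_le (h_pos hp.2) hh.le (h_abs hp.1) (h_gy hp)
    rw [← mul_sub, abs_mul h⁻¹, abs_mul h⁻¹, abs_of_pos (inv_pos.2 hh)]
    have hl_sq : l ^ 2 ≤ l := by nlinarith only [hl, hl_half]
    have hU : 1 ≤ h⁻¹ * (g (y + h) t - g y t) + (L + 1) := by
      linarith [(abs_le.1 (h_quot hp)).1]
    calc l ^ 2 * (h⁻¹ * |gt (y + h) t - gt y t - (gyy (y + h) t - gyy y t)|)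
        ≤ l ^ 2 * (h⁻¹ * (4 * (1 + L + M) ^ 2 * exp Y * (|gy (y + h) t - gy y t| + h))) := by
          gcongr
      _ = 4 * (1 + L + M) ^ 2 * exp Y * (l ^ 2 * (h⁻¹ * |gy (y + h) t - gy y t|))
          + 4 * (1 + L + M) ^ 2 * exp Y * l ^ 2 := by field_simp
      _ ≤ _ := by gcongr; linarith

lemma exists_abs_gyy_le (S : LogSol g gy gyy gt M) (hpos : ∀ y t, 0 < t → 0 < g y t)
    (ht₁ : 0 < t₁) (t₂ Y : ℝ) : ∃ C, ∀ y, |y| ≤ Y → ∀ t ∈ Icc t₁ t₂, |gyy y t| ≤ C := by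
  obtain ⟨L, -, hL⟩ := S.exists_abs_gy_le hpos (half_pos ht₁) t₂ (Y + 2)
  obtain ⟨l, hl, hl_half, hlt⟩ := exists_radius ht₁
  refine ⟨(16 + 8 * (4 * (1 + L + M) ^ 2 * exp (Y + 2)))
    * ((2 * L + 1) * (Nat.factorial 2 * exp 2)) / l, fun y hy t ht => ?_⟩
  have h_slope := (S.hasDerivAt_yy (y := y) ⟨trivial, ht₁.trans_le ht.1⟩).tendsto_slope_zero_right
  refine le_of_tendsto h_slope.abs ?_
  filter_upwards [Ioc_mem_nhdsGT (zero_lt_one' ℝ)] with h hh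
  rw [smul_eq_mul, le_div_iff₀' hl]
  exact S.abs_gy_sub_le hl hl_half (by linarith [ht.1]) hh.1 hh.2 (by linarith : |y| + 2 ≤ Y + 2)
    fun z hz s hs => hL z hz s ⟨by linarith [hs.1, ht.1], hs.2.trans ht.2⟩

lemma exists_abs_gt_le (S : LogSol g gy gyy gt M) (hpos : ∀ y t, 0 < t → 0 < g y t)
    (ht₁ : 0 < t₁) (t₂ Y : ℝ) : ∃ C, ∀ y, |y| ≤ Y → ∀ t ∈ Icc t₁ t₂, |gt y t| ≤ C := by
  obtain ⟨L, -, hL⟩ := S.exists_abs_gy_le hpos ht₁ t₂ Y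
  obtain ⟨C, hC⟩ := S.exists_abs_gyy_le hpos ht₁ t₂ Y
  refine ⟨(2 + 2 * M) * exp Y * L + 2 * exp Y * M + C, fun y hy t ht => ?_⟩
  have ht₀ : 0 < t := ht₁.trans_le ht.1
  have hM : 0 ≤ M := zero_le_one.trans S.one_le
  calc |gt y t| ≤ |gt y t - gyy y t| + |gyy y t| := by
        simpa using abs_add_le (gt y t - gyy y t) (gyy y t)
    _ ≤ (2 + 2 * M) * exp Y * L + 2 * exp Y * M + C := by
        refine add_le_add ((S.abs_heat_le ht₀ hy).trans ?_) (hC y hy t ht)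
        gcongr
        exacts [hL y hy t ht, S.le y t ht₀]

end LogSol

/-! ### Bounds for the entropy density, the boundary terms and the dissipation -/

/-- The entropy density: the integrand of `Hent`. -/
noncomputable def entDensity (x u : ℝ) : ℝ :=
  x * u + u * log u - (u + x ^ 2) * log (u + x ^ 2) + x ^ 2 * log (x ^ 2)

/-- The derivative of the entropy density in `u`. -/
noncomputable def entPotential (x u : ℝ) : ℝ := x + log u - log (u + x ^ 2)

/-- The pointwise bounds needed to pass to the limit in the truncated entropies, at a point `x`
where the solution is `u` and the flux is `J`; the value `T` stands for an integrable function
of `x`. -/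
structure EntropyBound (x u J K T : ℝ) : Prop where
  dissipation_le : J ^ 2 / (u * (u + x ^ 2)) ≤ K * T
  abs_boundary_le : |entPotential x u * J| ≤ K * (x * T)
  abs_density_le : |entDensity x u| ≤ K * T

lemma EntropyBound.mono {x u J K K' T : ℝ} (h : EntropyBound x u J K T) (hx : 0 ≤ x) (hT : 0 ≤ T)
    (hK : K ≤ K') : EntropyBound x u J K' T where
  dissipation_le := h.dissipation_le.trans (by gcongr)
  abs_boundary_le := h.abs_boundary_le.trans (by gcongr)
  abs_density_le := h.abs_density_le.trans (by gcongr)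

lemma log_add_sub_log_le {u v : ℝ} (hu : 0 < u) (hv : 0 ≤ v) : log (u + v) - log u ≤ v / u := by
  rw [← log_div (by positivity) hu.ne']
  refine (log_le_sub_one_of_pos (by positivity)).trans_eq ?_
  field_simp
  ring

lemma log_le_log_add {u v : ℝ} (hu : 0 < u) (hv : 0 ≤ v) : log u ≤ log (u + v) :=
  log_le_log hu (le_add_of_nonneg_right hv)

section Pointwise

variable {x u A l J C T : ℝ}

lemma abs_entDensity_le (hx : 0 < x) (hu : 0 < u) :
    |entDensity x u| ≤ x * u + u * (log (u + x ^ 2) - log u) + u := by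
  have hx_sq : 0 < x ^ 2 := by positivity
  have h_split : entDensity x u = x * u - u * (log (u + x ^ 2) - log u)
      - x ^ 2 * (log (x ^ 2 + u) - log (x ^ 2)) := by
    rw [entDensity, add_comm (x ^ 2) u]
    ring
  have h_fst : 0 ≤ u * (log (u + x ^ 2) - log u) :=
    mul_nonneg hu.le (sub_nonneg.2 (log_le_log_add hu hx_sq.le))
  have h_snd : 0 ≤ x ^ 2 * (log (x ^ 2 + u) - log (x ^ 2)) :=
    mul_nonneg hx_sq.le (sub_nonneg.2 (log_le_log_add hx_sq hu.le))
  have h_snd_le : x ^ 2 * (log (x ^ 2 + u) - log (x ^ 2)) ≤ u := by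
    rw [← le_div_iff₀' hx_sq]
    exact log_add_sub_log_le hx_sq hu.le
  have hxu : 0 < x * u := by positivity
  rw [h_split]
  exact abs_le.2 ⟨by linarith, by linarith⟩

lemma abs_entPotential_le (hx : 0 ≤ x) (hu : 0 < u) :
    |entPotential x u| ≤ x + (log (u + x ^ 2) - log u) := by
  have h_le := log_le_log_add hu (sq_nonneg x)
  exact abs_le.2 ⟨by rw [entPotential]; linarith, by rw [entPotential]; linarith⟩

lemma sq_div_mul_add_le {a v : ℝ} (hu : 0 < u) (hv : 0 ≤ v) (hJ : |J| ≤ a * u) :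
    J ^ 2 / (u * (u + v)) ≤ a ^ 2 * (u / (u + v)) := by
  calc J ^ 2 / (u * (u + v)) ≤ (a * u) ^ 2 / (u * (u + v)) := by
        rw [← sq_abs]
        gcongr
    _ = a ^ 2 * (u / (u + v)) := by field_simp

lemma entropyBound_of_le_one {K : ℝ} (hx : 0 < x) (hx_one : x ≤ 1) (hu : 0 < u) (huA : u ≤ A)
    (hl : 1 ≤ l) (hC : 1 ≤ C) (hK : 1 ≤ K) (hJ : |J| ≤ C * (u * l ^ 2)) (hlT : l ^ 4 ≤ K * T)
    (hT : 1 ≤ T) : EntropyBound x u J (C ^ 2 * K * (2 * A + 1)) T := by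
  have hA : 0 < A := hu.trans_le huA
  have hx_sq : x ^ 2 ≤ x := by nlinarith only [hx, hx_one]
  have hC_sq : C ≤ C ^ 2 := le_self_pow₀ hC two_ne_zero
  have h_log : u * (log (u + x ^ 2) - log u) ≤ x := by
    refine le_trans ?_ hx_sq
    rw [← le_div_iff₀' hu]
    exact log_add_sub_log_le hu (sq_nonneg x)
  have hxu : x * u ≤ A * x := by nlinarith only [hx, huA]
  refine ⟨?_, ?_, ?_⟩
  · have hJ_mul : |J| ≤ C * l ^ 2 * u := hJ.trans_eq (by ring)
    calc J ^ 2 / (u * (u + x ^ 2)) ≤ (C * l ^ 2) ^ 2 * (u / (u + x ^ 2)) :=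
          sq_div_mul_add_le hu (sq_nonneg x) hJ_mul
      _ ≤ (C * l ^ 2) ^ 2 * 1 := by gcongr; exact div_le_one_of_le₀ (by nlinarith) (by positivity)
      _ = C ^ 2 * 1 * l ^ 4 := by ring
      _ ≤ C ^ 2 * (2 * A + 1) * (K * T) := by gcongr; linarith
      _ = _ := by ring
  · calc |entPotential x u * J|
        ≤ (x + (log (u + x ^ 2) - log u)) * (C * (u * l ^ 2)) := by
          rw [abs_mul]
          gcongr
          exacts [(abs_nonneg _).trans (abs_entPotential_le hx.le hu), abs_entPotential_le hx.le hu]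
      _ = C * l ^ 2 * (x * u + u * (log (u + x ^ 2) - log u)) := by ring
      _ ≤ C ^ 2 * l ^ 4 * (A * x + x) := by
          have h_log_nonneg := sub_nonneg.2 (log_le_log_add hu (sq_nonneg x))
          gcongr
          norm_num
      _ ≤ C ^ 2 * (K * T) * ((2 * A + 1) * x) := by gcongr; nlinarith only [hA, hx]
      _ = _ := by ring
  · calc |entDensity x u| ≤ x * u + u * (log (u + x ^ 2) - log u) + u := abs_entDensity_le hx hu
      _ ≤ 1 * 1 * (2 * A + 1) * 1 := by nlinarith only [hxu, h_log, huA, hx_one, hA]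
      _ ≤ C ^ 2 * K * (2 * A + 1) * T := by gcongr; exact one_le_pow₀ hC

lemma pow_mul_div_pow_le {k m : ℕ} (hkm : k + 2 ≤ m) (hx : 1 ≤ x) (hA : 0 ≤ A) :
    x ^ k * (A / x ^ m) ≤ A * (x ^ 2)⁻¹ := by
  rw [← div_eq_mul_inv, mul_div_assoc', div_le_div_iff₀ (by positivity) (by positivity)]
  calc x ^ k * A * x ^ 2 = A * x ^ (k + 2) := by ring
    _ ≤ A * x ^ m := by gcongr

lemma log_add_sq_sub_log_le {k : ℕ} (hx : 1 ≤ x) (hu : 0 < u) (hA : 1 ≤ A)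
    (hum : u ≤ A / x ^ k) :
    log (u + x ^ 2) - log u ≤ log (A / x ^ k) - log u + (k + 2) * x := by
  have hx_sq : 1 ≤ x ^ 2 := one_le_pow₀ hx
  have hx_log : log x ≤ x - 1 := log_le_sub_one_of_pos (by positivity)
  have huA : u ≤ A := hum.trans (div_le_self (by positivity) (one_le_pow₀ hx))
  have h_two : log 2 ≤ 2 - 1 := log_le_sub_one_of_pos two_pos
  have h_add : log (u + x ^ 2) ≤ log 2 + (log A + 2 * log x) := by
    calc log (u + x ^ 2) ≤ log (2 * (A * x ^ 2)) := log_le_log (by positivity) (by nlinarith)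
      _ = _ := by
        rw [log_mul (by positivity) (by positivity), log_mul (by positivity) (by positivity),
          log_pow, Nat.cast_two]
  rw [log_div (by positivity) (by positivity), log_pow]
  nlinarith [k.cast_nonneg (α := ℝ)]

lemma pow_mul_mul_log_pow_le {i m : ℕ} (him : i + 2 ≤ m) (j : ℕ) (hx : 1 ≤ x) (hu : 0 < u)
    (hA : 0 ≤ A) (hum : u ≤ A / x ^ m) :
    x ^ i * (u * (2 + (log (A / x ^ m) - log u)) ^ j)
      ≤ Nat.factorial j * exp 2 * A * (x ^ 2)⁻¹ := by
  calc x ^ i * (u * (2 + (log (A / x ^ m) - log u)) ^ j)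
      ≤ x ^ i * (A / x ^ m * (Nat.factorial j * exp 2)) := by
        exact mul_le_mul_of_nonneg_left (mul_log_pow_le hu hum j) (by positivity)
    _ = Nat.factorial j * exp 2 * (x ^ i * (A / x ^ m)) := by ring
    _ ≤ Nat.factorial j * exp 2 * (A * (x ^ 2)⁻¹) := by
        exact mul_le_mul_of_nonneg_left (pow_mul_div_pow_le him hx hA) (by positivity)
    _ = _ := by ring

/-- The decay of `u` absorbs the growth of the powers of `x`, and `mul_log_pow_le` the powers of
the logarithm. -/
lemma entropyBound_of_one_le (hx : 1 ≤ x) (hu : 0 < u) (hA : 1 ≤ A) (hum : u ≤ A / x ^ 12)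
    (hl : l = 2 + (log (A / x ^ 12) - log u)) (hC : 1 ≤ C)
    (hJ : |J| ≤ C * x ^ 2 * (u * l ^ 2)) :
    EntropyBound x u J (96 * C ^ 2 * A * exp 2) (x ^ 2)⁻¹ := by
  have hx_pos : 0 < x := by positivity
  have hC_sq : C ≤ C ^ 2 := le_self_pow₀ hC two_ne_zero
  have hl_two : 2 ≤ l := by linarith [log_le_log hu hum]
  have h_decay (i : ℕ) (hi : i + 2 ≤ 12) (j : ℕ) : x ^ i * (u * l ^ j)
      ≤ Nat.factorial j * exp 2 * A * (x ^ 2)⁻¹ :=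
    hl ▸ pow_mul_mul_log_pow_le hi j hx hu (by positivity) hum
  have h_log : x + (log (u + x ^ 2) - log u) ≤ 16 * (x * l) := by
    have := log_add_sq_sub_log_le hx hu hA hum
    norm_num at this
    nlinarith only [this, hl, hl_two, hx]
  refine ⟨?_, ?_, ?_⟩
  · have hJ_mul : |J| ≤ C * x ^ 2 * l ^ 2 * u := hJ.trans_eq (by ring)
    calc J ^ 2 / (u * (u + x ^ 2)) ≤ (C * x ^ 2 * l ^ 2) ^ 2 * (u / (u + x ^ 2)) :=
          sq_div_mul_add_le hu (sq_nonneg x) hJ_mul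
      _ ≤ (C * x ^ 2 * l ^ 2) ^ 2 * (u / x ^ 2) := by gcongr; linarith
      _ = C ^ 2 * (x ^ 2 * (u * l ^ 4)) := by field_simp
      _ ≤ C ^ 2 * (Nat.factorial 4 * exp 2 * A * (x ^ 2)⁻¹) :=
          mul_le_mul_of_nonneg_left (h_decay 2 (by simp) 4) (by positivity)
      _ ≤ C ^ 2 * (96 * exp 2 * A * (x ^ 2)⁻¹) := by gcongr; norm_num [Nat.factorial]
      _ = _ := by ring
  · calc |entPotential x u * J| ≤ 16 * (x * l) * (C * x ^ 2 * (u * l ^ 2)) := by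
          rw [abs_mul]
          gcongr
          exact (abs_entPotential_le hx_pos.le hu).trans h_log
      _ = 16 * C * x * (x ^ 2 * (u * l ^ 3)) := by ring
      _ ≤ 16 * C ^ 2 * x * (Nat.factorial 3 * exp 2 * A * (x ^ 2)⁻¹) :=
          mul_le_mul (by gcongr) (h_decay 2 (by simp) 3) (by positivity) (by positivity)
      _ = _ := by norm_num [Nat.factorial]; ring
  · calc |entDensity x u| ≤ u * (x + (log (u + x ^ 2) - log u)) + u :=
          (abs_entDensity_le hx_pos hu).trans_eq (by ring)
      _ ≤ u * (16 * (x * l)) + u * (x * l) := by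
          gcongr
          exact le_mul_of_one_le_right hu.le (by nlinarith)
      _ = 17 * (x ^ 1 * (u * l ^ 1)) := by ring
      _ ≤ 17 * (Nat.factorial 1 * exp 2 * A * (x ^ 2)⁻¹) :=
          mul_le_mul_of_nonneg_left (h_decay 1 (by simp) 1) (by norm_num)
      _ = 17 * 1 ^ 2 * A * exp 2 * (x ^ 2)⁻¹ := by norm_num; ring
      _ ≤ 96 * C ^ 2 * A * exp 2 * (x ^ 2)⁻¹ := by gcongr; norm_num

end Pointwise

/-- An integrable function on `(0, ∞)` with `x * weight x → 0` at both ends; up to a constant it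
dominates the entropy density and the dissipation. -/
noncomputable def weight (x : ℝ) : ℝ := if x ≤ 1 then x ^ (-1 / 2 : ℝ) else x ^ (-2 : ℝ)

lemma weight_of_le {x : ℝ} (h : x ≤ 1) : weight x = x ^ (-1 / 2 : ℝ) := if_pos h

lemma weight_of_lt {x : ℝ} (h : 1 < x) : weight x = (x ^ 2)⁻¹ := by
  rw [weight, if_neg h.not_ge, rpow_neg (zero_le_one.trans h.le), rpow_two]

lemma integrableOn_weight : IntegrableOn weight (Ioi 0) := by
  have h_zero : IntegrableOn (fun x : ℝ => x ^ (-1 / 2 : ℝ)) (Ioc 0 1) :=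
    (intervalIntegrable_iff_integrableOn_Ioc_of_le zero_le_one).1
      (intervalIntegral.intervalIntegrable_rpow' (by norm_num))
  have h_infty : IntegrableOn (fun x : ℝ => x ^ (-2 : ℝ)) (Ioi 1) :=
    integrableOn_Ioi_rpow_of_lt (by norm_num) one_pos
  rw [← Ioc_union_Ioi_eq_Ioi (zero_le_one' ℝ)]
  exact (h_zero.congr_fun (fun x hx => (if_pos hx.2).symm) measurableSet_Ioc).union
    (h_infty.congr_fun (fun x hx => (if_neg (not_le.2 hx)).symm) measurableSet_Ioi)

lemma one_sub_log_pow_le {x : ℝ} (hx : 0 < x) (hx_one : x ≤ 1) (k : ℕ) :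
    (1 - log x) ^ k ≤ 2 ^ k * Nat.factorial k * exp (1 / 2) * x ^ (-1 / 2 : ℝ) := by
  have h_exp : exp ((1 - log x) / 2) = exp (1 / 2) * x ^ (-1 / 2 : ℝ) := by
    rw [rpow_def_of_pos hx, ← exp_add]
    ring_nf
  have key := Real.pow_div_factorial_le_exp ((1 - log x) / 2)
    (by linarith [log_nonpos hx.le hx_one]) k
  rw [h_exp, div_pow, div_div, div_le_iff₀ (by positivity)] at key
  linarith

lemma majorant_log_of_le_one {k : ℕ} {A x : ℝ} (hx : 0 ≤ x) (hx_one : x ≤ 1) :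
    majorant k A (log x) = A := by
  rw [majorant, max_eq_right (log_nonpos hx hx_one), mul_zero, exp_zero, mul_one]

lemma majorant_log_of_one_le {k : ℕ} {A x : ℝ} (hx : 1 ≤ x) :
    majorant k A (log x) = A / x ^ k := by
  rw [majorant, max_eq_left (log_nonneg hx), neg_mul, exp_neg, exp_nat_mul,
    exp_log (zero_lt_one.trans_le hx), div_eq_mul_inv]

lemma mul_exp_abs_log_le {x : ℝ} (hx : 0 < x) : x * exp |log x| ≤ max 1 (x ^ 2) := by
  rcases le_total x 1 with hx_one | hx_one
  · rw [abs_of_nonpos (log_nonpos hx.le hx_one), exp_neg, exp_log hx, mul_inv_cancel₀ hx.ne']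
    exact le_max_left _ _
  · rw [abs_of_nonneg (log_nonneg hx_one), exp_log hx, ← sq]
    exact le_max_right _ _

namespace IsKompSol

variable {n : ℝ → ℝ → ℝ} {n₀ : ℝ → ℝ} {t₁ t₂ : ℝ}

lemma exists_abs_kompFlux_le (h : IsKompSol n n₀) (hpos : ∀ x t, 0 < x → 0 < t → 0 < n x t)
    {k : ℕ} (hk : 3 ≤ k) (ht₁ : 0 < t₁) (t₂ : ℝ) :
    ∃ C A, 1 ≤ C ∧ 1 ≤ A ∧ ∀ x, 0 < x → ∀ t ∈ Icc t₁ t₂, n x t ≤ majorant k A (log x) ∧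
      |kompFlux (fun z => n z t) x| ≤ C * max 1 (x ^ 2)
        * (n x t * (2 + (log (majorant k A (log x)) - log (n x t))) ^ 2) := by
  obtain ⟨M, S⟩ := h.exists_logSol
  obtain ⟨C, A, hC, hA, hdecay, hgrad⟩ :=
    S.exists_gradient_bound (fun y t ht => hpos _ _ (exp_pos y) ht) hk ht₁ t₂
  refine ⟨C + 1 + A, A, by linarith, hA, fun x hx t ht => ?_⟩
  have hu := hpos x t hx (ht₁.trans_le ht.1)
  have hn_le := hdecay (log x) t ht
  have hx_grad := hgrad (log x) t ht
  simp only [exp_log hx] at hn_le hx_grad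
  refine ⟨hn_le, ?_⟩
  set u := n x t with hu_def
  set X := max 1 (x ^ 2)
  set V := u * (2 + (log (majorant k A (log x)) - log u)) ^ 2
  have hX : 1 ≤ X := le_max_left _ _
  have huV : u ≤ V := le_mul_of_one_le_right hu.le
    (one_le_pow₀ (by linarith [log_le_log hu hn_le]))
  have h_fst : |x ^ 2 * deriv (fun z => n z t) x| ≤ C * X * V := by
    calc |x ^ 2 * deriv (fun z => n z t) x| = x * |x * deriv (fun z => n z t) x| := by
          rw [sq, mul_assoc, abs_mul, abs_of_pos hx]
      _ ≤ x * (C * exp |log x| * V) := by gcongr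
      _ = C * (x * exp |log x|) * V := by ring
      _ ≤ C * X * V := by gcongr; exact mul_exp_abs_log_le hx
  have h_snd : |(x ^ 2 - 2 * x) * u| ≤ X * V := by
    rw [abs_mul, abs_of_pos hu]
    refine mul_le_mul (abs_le.2 ⟨?_, ?_⟩) huV hu.le (by positivity)
    · nlinarith only [hX, sq_nonneg (x - 1)]
    · linarith [le_max_right 1 (x ^ 2)]
  have h_trd : |u ^ 2| ≤ A * X * V := by
    rw [abs_of_nonneg (sq_nonneg u), sq]
    have huA : u ≤ A := hn_le.trans (majorant_le (zero_le_one.trans hA) _)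
    exact mul_le_mul (huA.trans (le_mul_of_one_le_right (by positivity) hX)) huV hu.le
      (by positivity)
  rw [kompFlux, ← hu_def]
  exact (abs_add_three _ _ _).trans (by linarith)

lemma exists_log_sub_log_pow_le (h : IsKompSol n n₀) (hpos : ∀ x t, 0 < x → 0 < t → 0 < n x t)
    (ht₁ : 0 < t₁) (ht₂ : t₁ ≤ t₂) (A : ℝ) :
    ∃ K, 1 ≤ K ∧ ∀ x, 0 < x → x ≤ 1 → ∀ t ∈ Icc t₁ t₂, n x t ≤ A →
      (2 + (log A - log (n x t))) ^ 4 ≤ K * x ^ (-1 / 2 : ℝ) := by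
  obtain ⟨M, S⟩ := h.exists_logSol
  obtain ⟨ε, κ, hε, hκ, hlow⟩ :=
    S.exists_gaussian_le (fun y t ht => hpos _ _ (exp_pos y) ht) ht₁ ht₂
  refine ⟨max 1 ((2 + |log A - log ε| + κ) ^ 4 * (2 ^ 8 * Nat.factorial 8 * exp (1 / 2))),
    le_max_left _ _, fun x hx hx_one t ht huA => ?_⟩
  have hu := hpos x t hx (ht₁.trans_le ht.1)
  have hx_log : log x ≤ 0 := log_nonpos hx.le hx_one
  have h_log_le : log ε - κ * (1 - log x) ^ 2 ≤ log (n x t) := by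
    have := log_le_log (by positivity) (hlow (log x) hx_log t ht)
    rw [exp_log hx, log_mul hε.ne' (exp_ne_zero _), log_exp] at this
    linarith
  have h_sq : 1 ≤ (1 - log x) ^ 2 := one_le_pow₀ (by linarith)
  have h_le : 2 + (log A - log (n x t)) ≤ (2 + |log A - log ε| + κ) * (1 - log x) ^ 2 := by
    nlinarith only [h_log_le, h_sq, le_abs_self (log A - log ε), abs_nonneg (log A - log ε)]
  calc (2 + (log A - log (n x t))) ^ 4 ≤ ((2 + |log A - log ε| + κ) * (1 - log x) ^ 2) ^ 4 := by
        gcongr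
        linarith [log_le_log hu huA]
    _ = (2 + |log A - log ε| + κ) ^ 4 * (1 - log x) ^ 8 := by ring
    _ ≤ (2 + |log A - log ε| + κ) ^ 4
          * (2 ^ 8 * Nat.factorial 8 * exp (1 / 2) * x ^ (-1 / 2 : ℝ)) := by
        gcongr
        exact one_sub_log_pow_le hx hx_one 8
    _ ≤ _ := by
        rw [← mul_assoc]
        gcongr
        exact le_max_right _ _

lemma exists_entropyBound (h : IsKompSol n n₀) (hpos : ∀ x t, 0 < x → 0 < t → 0 < n x t)
    (ht₁ : 0 < t₁) (ht₂ : t₁ ≤ t₂) :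
    ∃ B, ∀ x, 0 < x → ∀ t ∈ Icc t₁ t₂,
      EntropyBound x (n x t) (kompFlux (fun z => n z t) x) B (weight x) := by
  obtain ⟨C, A, hC, hA, hflux⟩ :=
    h.exists_abs_kompFlux_le hpos (by norm_num : 3 ≤ 12) ht₁ t₂
  obtain ⟨K, hK, hlog⟩ := h.exists_log_sub_log_pow_le hpos ht₁ ht₂ A
  refine ⟨max (C ^ 2 * K * (2 * A + 1)) (96 * C ^ 2 * A * exp 2), fun x hx t ht => ?_⟩
  have hu := hpos x t hx (ht₁.trans_le ht.1)
  obtain ⟨hn_le, hJ⟩ := hflux x hx t ht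
  rcases le_or_gt x 1 with hx_one | hx_one
  · rw [majorant_log_of_le_one hx.le hx_one] at hn_le hJ
    rw [max_eq_left (pow_le_one₀ hx.le hx_one), mul_one] at hJ
    have hT : 1 ≤ x ^ (-1 / 2 : ℝ) :=
      one_le_rpow_of_pos_of_le_one_of_nonpos hx hx_one (by norm_num)
    rw [weight_of_le hx_one]
    exact (entropyBound_of_le_one hx hx_one hu hn_le (by linarith [log_le_log hu hn_le]) hC hK hJ
      (hlog x hx hx_one t ht hn_le) hT).mono hx.le (zero_le_one.trans hT) (le_max_left _ _)
  · rw [majorant_log_of_one_le hx_one.le] at hn_le hJ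
    rw [max_eq_right (one_le_pow₀ hx_one.le)] at hJ
    rw [weight_of_lt hx_one]
    exact (entropyBound_of_one_le hx_one.le hu hA hn_le rfl hC hJ).mono hx.le (by positivity)
      (le_max_right _ _)

end IsKompSol

/-! ### The truncated entropy -/

/-- The integrand `J ^ 2 / (u * (u + x ^ 2))` of the entropy dissipation, for a function `u`
of `x` with flux `J`. -/
noncomputable def dissipationDensity (u : ℝ → ℝ) (x : ℝ) : ℝ :=
  kompFlux u x ^ 2 / (u x * (u x + x ^ 2))

lemma hasDerivAt_entDensity {x u : ℝ} (hu : 0 < u) :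
    HasDerivAt (entDensity x) (entPotential x u) u := by
  have hux : u + x ^ 2 ≠ 0 := by positivity
  have h_add := (hasDerivAt_id u).add_const (x ^ 2)
  refine (((((hasDerivAt_id u).const_mul x).add
    ((hasDerivAt_id u).mul (hasDerivAt_log hu.ne'))).sub
      (h_add.mul (h_add.log hux))).add_const (x ^ 2 * log (x ^ 2))).congr_deriv ?_
  simp only [id, entPotential]
  field_simp
  ring

namespace IsKompSol

variable {n : ℝ → ℝ → ℝ} {n₀ : ℝ → ℝ} {x t : ℝ}

lemma hasDerivAt_entPotential (h : IsKompSol n n₀) (hpos : ∀ x t, 0 < x → 0 < t → 0 < n x t)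
    (hx : 0 < x) (ht : 0 < t) :
    HasDerivAt (fun y => entPotential y (n y t))
      (kompFlux (fun z => n z t) x / (n x t * (n x t + x ^ 2))) x := by
  have hu := hpos x t hx ht
  have hux : n x t + x ^ 2 ≠ 0 := by positivity
  have hn := (h.diff_x t ht x hx).hasDerivAt
  refine (((hasDerivAt_id x).add (hn.log hu.ne')).sub
    ((hn.add ((hasDerivAt_id x).pow 2)).log hux)).congr_deriv ?_
  simp only [id, Pi.add_apply, Pi.pow_apply, kompFlux]
  field_simp
  ring

lemma continuousOn_slice (h : IsKompSol n n₀) (ht : 0 < t) :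
    ContinuousOn (fun x => n x t) (Ioi 0) := fun x hx =>
  (h.diff_x t ht x hx).continuousAt.continuousWithinAt

lemma continuousOn_kompFlux (h : IsKompSol n n₀) (ht : 0 < t) :
    ContinuousOn (kompFlux fun z => n z t) (Ioi 0) := fun _ hx =>
  (h.hasDerivAt_kompFlux hx ht).continuousAt.continuousWithinAt

lemma continuousOn_entDensity (h : IsKompSol n n₀) (hpos : ∀ x t, 0 < x → 0 < t → 0 < n x t)
    (ht : 0 < t) : ContinuousOn (fun x => entDensity x (n x t)) (Ioi 0) := by
  have h_slice := h.continuousOn_slice ht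
  have h_sq : ContinuousOn (fun x : ℝ => x ^ 2) (Ioi 0) := by fun_prop
  have h_add : ContinuousOn (fun x => n x t + x ^ 2) (Ioi 0) := h_slice.add h_sq
  have h_log := h_slice.log fun x hx => (hpos x t hx ht).ne'
  have h_log_add := h_add.log fun x hx => (add_pos (hpos x t hx ht) (pow_pos hx 2)).ne'
  have h_log_sq := h_sq.log fun x hx => (pow_pos hx 2).ne'
  exact (((continuousOn_id.mul h_slice).add (h_slice.mul h_log)).sub (h_add.mul h_log_add)).add
    (h_sq.mul h_log_sq)

lemma continuousOn_entPotential (h : IsKompSol n n₀) (hpos : ∀ x t, 0 < x → 0 < t → 0 < n x t) :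
    ContinuousOn (fun p : ℝ × ℝ => entPotential p.1 (n p.1 p.2)) (Ioi 0 ×ˢ Ioi 0) := by
  have hn_pos ⦃p : ℝ × ℝ⦄ (hp : p ∈ Ioi (0 : ℝ) ×ˢ Ioi (0 : ℝ)) : 0 < n p.1 p.2 :=
    hpos _ _ hp.1 hp.2
  exact (continuousOn_fst.add (h.contOn.log fun p hp => (hn_pos hp).ne')).sub
    ((h.contOn.add (continuousOn_fst.pow 2)).log fun p hp =>
      (add_pos (hn_pos hp) (pow_pos hp.1 2)).ne')

lemma continuousOn_kompFlux_div (h : IsKompSol n n₀) (hpos : ∀ x t, 0 < x → 0 < t → 0 < n x t)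
    (ht : 0 < t) :
    ContinuousOn (fun x => kompFlux (fun z => n z t) x / (n x t * (n x t + x ^ 2))) (Ioi 0) := by
  have h_slice := h.continuousOn_slice ht
  refine (h.continuousOn_kompFlux ht).div (h_slice.mul (h_slice.add (by fun_prop))) fun x hx => ?_
  have := hpos x t hx ht
  positivity

lemma exists_abs_deriv_kompFlux_le (h : IsKompSol n n₀)
    (hpos : ∀ x t, 0 < x → 0 < t → 0 < n x t) {a b t₁ : ℝ} (ha : 0 < a) (ht₁ : 0 < t₁) (t₂ : ℝ) :
    ∃ C, ∀ x ∈ Icc a b, ∀ t ∈ Icc t₁ t₂, |deriv (kompFlux fun z => n z t) x| ≤ C := by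
  obtain ⟨M, S⟩ := h.exists_logSol
  obtain ⟨C, hC⟩ := S.exists_abs_gt_le (fun y t ht => hpos _ _ (exp_pos y) ht) ht₁ t₂
    (max |log a| |log b|)
  refine ⟨C, fun x hx t ht => ?_⟩
  have hx_pos : 0 < x := ha.trans_le hx.1
  simpa only [exp_log hx_pos] using hC (log x)
    (abs_le_max_abs_abs (log_le_log ha hx.1) (log_le_log hx_pos hx.2)) t ht

lemma exists_abs_entPotential_le (h : IsKompSol n n₀) (hpos : ∀ x t, 0 < x → 0 < t → 0 < n x t)
    {a t₁ : ℝ} (ha : 0 < a) (b : ℝ) (ht₁ : 0 < t₁) (t₂ : ℝ) :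
    ∃ Q, 0 ≤ Q ∧ ∀ x ∈ Icc a b, ∀ t ∈ Icc t₁ t₂, |entPotential x (n x t)| ≤ Q := by
  have h_sub : Icc a b ×ˢ Icc t₁ t₂ ⊆ Ioi 0 ×ˢ Ioi 0 := fun p hp =>
    ⟨ha.trans_le hp.1.1, ht₁.trans_le hp.2.1⟩
  obtain ⟨Q, hQ⟩ := (isCompact_Icc.prod isCompact_Icc).exists_bound_of_continuousOn
    ((h.continuousOn_entPotential hpos).mono h_sub)
  exact ⟨max Q 0, le_max_right _ _, fun x hx t ht => (hQ (x, t) ⟨hx, ht⟩).trans (le_max_left _ _)⟩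

lemma intervalIntegrable_deriv_kompFlux (h : IsKompSol n n₀)
    (hpos : ∀ x t, 0 < x → 0 < t → 0 < n x t) {a b : ℝ} (ha : 0 < a) (hab : a ≤ b) (ht : 0 < t) :
    IntervalIntegrable (deriv (kompFlux fun z => n z t)) volume a b := by
  obtain ⟨C, hC⟩ := h.exists_abs_deriv_kompFlux_le hpos (b := b) ha ht t
  refine (intervalIntegrable_const (c := C)).mono_fun (aestronglyMeasurable_deriv _ _) ?_
  filter_upwards [ae_restrict_mem measurableSet_uIoc] with x hx
  rw [uIoc_of_le hab] at hx
  exact (hC x (Ioc_subset_Icc_self hx) t ⟨le_rfl, le_rfl⟩).trans (le_abs_self C)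

lemma hasDerivAt_integral_entDensity (h : IsKompSol n n₀)
    (hpos : ∀ x t, 0 < x → 0 < t → 0 < n x t) {a b : ℝ} (ha : 0 < a) (hab : a ≤ b) (ht : 0 < t) :
    HasDerivAt (fun τ => ∫ x in a..b, entDensity x (n x τ))
      (∫ x in a..b, entPotential x (n x t) * deriv (kompFlux fun z => n z t) x) t := by
  have h_Ioc : uIoc a b ⊆ Icc a b := uIoc_of_le hab ▸ Ioc_subset_Icc_self
  have h_Ioi : Icc a b ⊆ Ioi 0 := fun x hx => ha.trans_le hx.1
  have h_time ⦃τ⦄ (hτ : τ ∈ Icc (t / 2) (2 * t)) : 0 < τ := (half_pos ht).trans_le hτ.1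
  have h_nhds : Icc (t / 2) (2 * t) ∈ 𝓝 t := Icc_mem_nhds (by linarith) (by linarith)
  obtain ⟨C, hC⟩ := h.exists_abs_deriv_kompFlux_le hpos (b := b) ha (half_pos ht) (2 * t)
  obtain ⟨Q, hQ_nonneg, hQ⟩ := h.exists_abs_entPotential_le hpos ha b (half_pos ht) (2 * t)
  have h_pot : ContinuousOn (fun x => entPotential x (n x t)) (Ioi 0) := fun x hx =>
    (h.hasDerivAt_entPotential hpos hx ht).continuousAt.continuousWithinAt
  refine (intervalIntegral.hasDerivAt_integral_of_dominated_loc_of_deriv_le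
    (μ := volume) (F := fun τ x => entDensity x (n x τ))
    (F' := fun τ x => entPotential x (n x τ) * deriv (kompFlux fun z => n z τ) x)
    (bound := fun _ => Q * C) h_nhds ?_ ?_ ?_
    (ae_of_all _ fun x hx τ hτ => ?_) intervalIntegrable_const
    (ae_of_all _ fun x hx τ hτ => ?_)).2
  · filter_upwards [h_nhds] with τ hτ
    exact ((h.continuousOn_entDensity hpos (h_time hτ)).mono
      (h_Ioc.trans h_Ioi)).aestronglyMeasurable measurableSet_uIoc
  · exact ((h.continuousOn_entDensity hpos ht).mono
      ((uIcc_of_le hab).trans_subset h_Ioi)).intervalIntegrable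
  · exact ((h_pot.mono (h_Ioc.trans h_Ioi)).aestronglyMeasurable measurableSet_uIoc).mul
      (aestronglyMeasurable_deriv _ _)
  · rw [norm_mul]
    exact mul_le_mul (hQ x (h_Ioc hx) τ hτ) (hC x (h_Ioc hx) τ hτ) (norm_nonneg _) hQ_nonneg
  · have hx_pos : 0 < x := h_Ioi (h_Ioc hx)
    exact (hasDerivAt_entDensity (hpos x τ hx_pos (h_time hτ))).comp τ
      (h.hasDerivAt_time hx_pos (h_time hτ))

lemma hasDerivAt_truncated_entropy (h : IsKompSol n n₀)
    (hpos : ∀ x t, 0 < x → 0 < t → 0 < n x t) {a b : ℝ} (ha : 0 < a) (hab : a ≤ b) (ht : 0 < t) :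
    HasDerivAt (fun τ => ∫ x in a..b, entDensity x (n x τ))
      (entPotential b (n b t) * kompFlux (fun z => n z t) b
        - entPotential a (n a t) * kompFlux (fun z => n z t) a
        - ∫ x in a..b, dissipationDensity (fun z => n z t) x) t := by
  have h_Ioi : uIcc a b ⊆ Ioi 0 := fun x hx => ha.trans_le ((uIcc_of_le hab).subset hx).1
  refine (h.hasDerivAt_integral_entDensity hpos ha hab ht).congr_deriv ?_
  rw [intervalIntegral.integral_mul_deriv_eq_deriv_mul
    (fun x hx => h.hasDerivAt_entPotential hpos (h_Ioi hx) ht)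
    (fun x hx => (h.hasDerivAt_kompFlux (h_Ioi hx) ht).differentiableAt.hasDerivAt)
    ((h.continuousOn_kompFlux_div hpos ht).mono h_Ioi).intervalIntegrable
    (h.intervalIntegrable_deriv_kompFlux hpos ha hab ht)]
  simp only [dissipationDensity, div_mul_eq_mul_div, sq]

end IsKompSol

/-! ### Removal of the truncation -/

/-- The exhaustion `(1 / (k + 1), k + 1]` of `(0, ∞)`. -/
def exhaust (k : ℕ) : Set ℝ := Ioc (((k : ℝ) + 1)⁻¹) ((k : ℝ) + 1)

lemma monotone_exhaust : Monotone exhaust := fun i j hij => by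
  have h : (i : ℝ) ≤ j := Nat.cast_le.2 hij
  exact Ioc_subset_Ioc (inv_anti₀ (by positivity) (by linarith)) (by linarith)

lemma iUnion_exhaust : ⋃ k, exhaust k = Ioi 0 := by
  ext x
  simp only [mem_iUnion, exhaust, mem_Ioc, mem_Ioi]
  constructor
  · rintro ⟨k, hk, -⟩
    exact lt_trans (by positivity) hk
  · intro hx
    obtain ⟨k, hk⟩ := exists_nat_gt (max x x⁻¹)
    have hxk := (le_max_left x x⁻¹).trans_lt hk
    have hxk_inv := (le_max_right x x⁻¹).trans_lt hk
    exact ⟨k, inv_lt_of_inv_lt₀ hx (by linarith), by linarith⟩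

lemma inv_succ_le_succ (k : ℕ) : ((k : ℝ) + 1)⁻¹ ≤ (k : ℝ) + 1 := by
  have h : (1 : ℝ) ≤ (k : ℝ) + 1 := le_add_of_nonneg_left k.cast_nonneg
  exact (inv_le_one_of_one_le₀ h).trans h

lemma intervalIntegral_eq_setIntegral_exhaust (f : ℝ → ℝ) (k : ℕ) :
    ∫ x in ((k : ℝ) + 1)⁻¹..((k : ℝ) + 1), f x = ∫ x in exhaust k, f x :=
  intervalIntegral.integral_of_le (inv_succ_le_succ k)

lemma tendsto_setIntegral_exhaust {f : ℝ → ℝ} (hf : IntegrableOn f (Ioi 0)) :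
    Tendsto (fun k => ∫ x in exhaust k, f x) atTop (𝓝 (∫ x in Ioi 0, f x)) := by
  rw [← iUnion_exhaust] at hf ⊢
  exact tendsto_setIntegral_of_monotone (fun _ => measurableSet_Ioc) monotone_exhaust hf

lemma tendsto_inv_succ : Tendsto (fun k : ℕ => ((k : ℝ) + 1)⁻¹) atTop (𝓝 0) := by
  simpa only [one_div] using tendsto_one_div_add_atTop_nhds_zero_nat (𝕜 := ℝ)

lemma tendsto_succ_mul_weight :
    Tendsto (fun k : ℕ => ((k : ℝ) + 1) * weight ((k : ℝ) + 1)) atTop (𝓝 0) := by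
  refine tendsto_inv_succ.congr' ?_
  filter_upwards [eventually_gt_atTop 0] with k hk
  have hk_pos : (0 : ℝ) < k := Nat.cast_pos.2 hk
  rw [weight_of_lt (by linarith)]
  field_simp

lemma tendsto_inv_succ_mul_weight :
    Tendsto (fun k : ℕ => ((k : ℝ) + 1)⁻¹ * weight (((k : ℝ) + 1)⁻¹)) atTop (𝓝 0) := by
  have h_sqrt : Tendsto (fun x : ℝ => x ^ (1 / 2 : ℝ)) (𝓝 0) (𝓝 0) := by
    simpa using (continuous_rpow_const (by norm_num : (0 : ℝ) ≤ 1 / 2)).tendsto 0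
  refine (h_sqrt.comp tendsto_inv_succ).congr fun k => ?_
  have hk : (0 : ℝ) < ((k : ℝ) + 1)⁻¹ := by positivity
  rw [weight_of_le (inv_le_one_of_one_le₀ (by linarith [k.cast_nonneg (α := ℝ)])),
    ← rpow_one_add' hk.le (by norm_num), Function.comp_apply]
  norm_num

lemma setIntegral_sub_le_of_le {α : Type*} [MeasurableSpace α] {μ : Measure α} {f F : α → ℝ}
    {s t : Set α} (hs : MeasurableSet s) (hts : t ⊆ s) (hf : IntegrableOn f s μ)
    (hF : IntegrableOn F s μ) (hle : ∀ x ∈ s, f x ≤ F x) :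
    ∫ x in s, f x ∂μ - ∫ x in t, f x ∂μ ≤ ∫ x in s, F x ∂μ - ∫ x in t, F x ∂μ := by
  have h_mono : ∫ x in t, (F x - f x) ∂μ ≤ ∫ x in s, (F x - f x) ∂μ := by
    refine setIntegral_mono_set (hF.sub hf) ?_ hts.eventuallyLE
    filter_upwards [ae_restrict_mem hs] with x hx
    exact sub_nonneg.2 (hle x hx)
  rw [integral_sub hF hf, integral_sub (hF.mono_set hts) (hf.mono_set hts)] at h_mono
  linarith

lemma dissipationDensity_nonneg {u : ℝ → ℝ} {x : ℝ} (hu : 0 < u x) :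
    0 ≤ dissipationDensity u x := by
  unfold dissipationDensity
  positivity

namespace IsKompSol

variable {n : ℝ → ℝ → ℝ} {n₀ : ℝ → ℝ} {t B : ℝ}

lemma integrableOn_entDensity (h : IsKompSol n n₀) (hpos : ∀ x t, 0 < x → 0 < t → 0 < n x t)
    (ht : 0 < t)
    (hB : ∀ x, 0 < x → EntropyBound x (n x t) (kompFlux (fun z => n z t) x) B (weight x)) :
    IntegrableOn (fun x => entDensity x (n x t)) (Ioi 0) := by
  refine (integrableOn_weight.const_mul B).mono'
    ((h.continuousOn_entDensity hpos ht).aestronglyMeasurable measurableSet_Ioi) ?_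
  filter_upwards [ae_restrict_mem measurableSet_Ioi] with x hx
  exact (hB x hx).abs_density_le

lemma integrableOn_dissipationDensity (h : IsKompSol n n₀)
    (hpos : ∀ x t, 0 < x → 0 < t → 0 < n x t) (ht : 0 < t)
    (hB : ∀ x, 0 < x → EntropyBound x (n x t) (kompFlux (fun z => n z t) x) B (weight x)) :
    IntegrableOn (dissipationDensity fun z => n z t) (Ioi 0) := by
  have h_cont : ContinuousOn (dissipationDensity fun z => n z t) (Ioi 0) :=
    ((h.continuousOn_kompFlux ht).mul (h.continuousOn_kompFlux_div hpos ht)).congr fun x _ => by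
      rw [dissipationDensity, sq, mul_div_assoc]
      rfl
  refine (integrableOn_weight.const_mul B).mono' (h_cont.aestronglyMeasurable measurableSet_Ioi) ?_
  filter_upwards [ae_restrict_mem measurableSet_Ioi] with x hx
  rw [norm_of_nonneg (dissipationDensity_nonneg (u := fun z => n z t) (hpos x t hx ht))]
  exact (hB x hx).dissipation_le

/-- The error is controlled by `B * weight` alone, hence uniformly in time. -/
lemma abs_truncation_error_le (h : IsKompSol n n₀) (hpos : ∀ x t, 0 < x → 0 < t → 0 < n x t)
    (ht : 0 < t)
    (hB : ∀ x, 0 < x → EntropyBound x (n x t) (kompFlux (fun z => n z t) x) B (weight x))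
    {a b : ℝ} (ha : 0 < a) (hab : a ≤ b) :
    |-(∫ x in Ioi 0, dissipationDensity (fun z => n z t) x)
        - (entPotential b (n b t) * kompFlux (fun z => n z t) b
          - entPotential a (n a t) * kompFlux (fun z => n z t) a
          - ∫ x in a..b, dissipationDensity (fun z => n z t) x)|
      ≤ B * (b * weight b) + B * (a * weight a)
        + ((∫ x in Ioi 0, B * weight x) - ∫ x in Ioc a b, B * weight x) := by
  have h_sub : Ioc a b ⊆ Ioi 0 := fun x hx => ha.trans hx.1
  have h_int := h.integrableOn_dissipationDensity hpos ht hB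
  have h_tail_le := setIntegral_sub_le_of_le measurableSet_Ioi h_sub h_int
    (integrableOn_weight.const_mul B) fun x hx => (hB x hx).dissipation_le
  have h_tail_nonneg : ∫ x in Ioc a b, dissipationDensity (fun z => n z t) x
      ≤ ∫ x in Ioi 0, dissipationDensity (fun z => n z t) x := by
    refine setIntegral_mono_set h_int ?_ h_sub.eventuallyLE
    filter_upwards [ae_restrict_mem measurableSet_Ioi] with x hx
    exact dissipationDensity_nonneg (hpos x t hx ht)
  have h_left := abs_le.1 (hB a ha).abs_boundary_le
  have h_right := abs_le.1 (hB b (ha.trans_le hab)).abs_boundary_le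
  rw [intervalIntegral.integral_of_le hab]
  exact abs_le.2 ⟨by linarith, by linarith⟩

lemma hasDerivAt_Hent_of_pos (h : IsKompSol n n₀) (hpos : ∀ x t, 0 < x → 0 < t → 0 < n x t)
    (ht : 0 < t) :
    HasDerivAt (fun τ => Hent (fun x => n x τ))
      (-∫ x in Ioi 0, dissipationDensity (fun z => n z t) x) t := by
  obtain ⟨B, hB⟩ := h.exists_entropyBound hpos (half_pos ht) (by linarith : t / 2 ≤ 2 * t)
  have h_time ⦃s⦄ (hs : s ∈ Ioo (t / 2) (2 * t)) : 0 < s := (half_pos ht).trans hs.1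
  have h_bound ⦃s⦄ (hs : s ∈ Ioo (t / 2) (2 * t)) (x : ℝ) (hx : 0 < x) :=
    hB x hx s (Ioo_subset_Icc_self hs)
  have h_err : Tendsto (fun k : ℕ => B * (((k : ℝ) + 1) * weight ((k : ℝ) + 1))
      + B * (((k : ℝ) + 1)⁻¹ * weight (((k : ℝ) + 1)⁻¹))
      + ((∫ x in Ioi 0, B * weight x) - ∫ x in exhaust k, B * weight x)) atTop (𝓝 0) := by
    simpa using ((tendsto_succ_mul_weight.const_mul B).add
      (tendsto_inv_succ_mul_weight.const_mul B)).add
        ((tendsto_setIntegral_exhaust (integrableOn_weight.const_mul B)).const_sub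
          (∫ x in Ioi 0, B * weight x))
  refine hasDerivAt_of_tendstoUniformlyOn (l := (atTop : Filter ℕ)) isOpen_Ioo
    (g' := fun τ => -∫ x in Ioi 0, dissipationDensity (fun z => n z τ) x) ?_
    (Eventually.of_forall fun k s hs => h.hasDerivAt_truncated_entropy hpos
      (by positivity) (inv_succ_le_succ k) (h_time hs)) (fun s hs => ?_)
    (⟨by linarith, by linarith⟩ : t ∈ Ioo (t / 2) (2 * t))
  · rw [Metric.tendstoUniformlyOn_iff]
    intro ε hε
    filter_upwards [h_err.eventually_lt_const hε] with k hk s hs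
    exact (h.abs_truncation_error_le hpos (h_time hs) (h_bound hs) (by positivity)
      (inv_succ_le_succ k)).trans_lt hk
  · exact (tendsto_setIntegral_exhaust
      (h.integrableOn_entDensity hpos (h_time hs) (h_bound hs))).congr
        fun k => (intervalIntegral_eq_setIntegral_exhaust _ k).symm

end IsKompSol

lemma Hent_eq_zero {u : ℝ → ℝ} (hu : ∀ x, 0 < x → u x = 0) : Hent u = 0 :=
  setIntegral_eq_zero_of_forall_eq_zero fun x hx => by simp [hu x hx]

theorem entropy_dissipation_general
    (n : ℝ → ℝ → ℝ) (n₀ : ℝ → ℝ) (hsol : IsKompSol n n₀)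
    (_hne : ∃ x : ℝ, 0 < x ∧ n₀ x ≠ 0) {t : ℝ} (ht : 0 < t) :
    HasDerivAt (fun τ => Hent (fun x => n x τ))
      (-(∫ x in Ioi (0 : ℝ),
          kompFlux (fun z => n z t) x ^ 2 / (n x t * (n x t + x ^ 2)))) t := by
  obtain ⟨M, S⟩ := hsol.exists_logSol
  rcases S.eq_zero_or_pos with h_zero | h_pos
  · have hn_zero (s : ℝ) (hs : 0 < s) (x : ℝ) (hx : 0 < x) : n x s = 0 := by
      simpa only [exp_log hx] using h_zero (log x) s hs
    -- `n₀` may vanish almost everywhere, and then every quotient below is `0 / 0 = 0`.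
    have h_dissipation : ∫ x in Ioi (0 : ℝ),
        kompFlux (fun z => n z t) x ^ 2 / (n x t * (n x t + x ^ 2)) = 0 :=
      setIntegral_eq_zero_of_forall_eq_zero fun x hx => by simp [hn_zero t ht x hx]
    rw [h_dissipation, neg_zero]
    refine (hasDerivAt_const t 0).congr_of_eventuallyEq ?_
    filter_upwards [lt_mem_nhds ht] with s hs
    exact Hent_eq_zero (hn_zero s hs)
  · refine hsol.hasDerivAt_Hent_of_pos (fun x s hx hs => ?_) ht
    simpa only [exp_log hx] using h_pos (log x) s hs

theorem entropy_dissipation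
    (n : ℝ → ℝ → ℝ) (n₀ : ℝ → ℝ)
    (hsol : IsKompSol n n₀)
    (h0nonneg : ∀ x : ℝ, 0 < x → 0 ≤ n₀ x)
    (h0bdd : ∃ C : ℝ, ∀ x : ℝ, 0 < x → n₀ x ≤ C)
    (h0decay : Filter.Tendsto (fun x => x ^ 2 * n₀ x) Filter.atTop (nhds 0))
    (hne : ∃ x : ℝ, 0 < x ∧ n₀ x ≠ 0)
    (C₀ : ℝ) (hC₀ : 0 < C₀)
    (hexp : ∀ x : ℝ, 0 < x → n₀ x ≤ C₀ * (1 + x ^ 2) * Real.exp (-x)) :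
    ∀ t : ℝ, 0 < t →
      HasDerivAt (fun τ => Hent (fun x => n x τ))
        (-(∫ x in Set.Ioi (0:ℝ),
            kompFlux (fun z => n z t) x ^ 2 / (n x t * (n x t + x ^ 2)))) t :=
  fun _ ht => entropy_dissipation_general n n₀ hsol hne ht
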